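/- Let p be a prime and m ∈ ℕ. Then K_1(C_{p^m} ⊕ C_p) = 1 + Σ_{k=1}^m 1/p^{k−1} = 1 + (p^m − 1)/(p^m − p^{m−1}). -/

import Mathlib

open Finset

/-- `S(I)` is minimal zero-sum: nonempty, zero-sum, and no proper nonempty
subfamily is zero-sum. -/
def IsMinZeroSum {G : Type*} [AddCommGroup G] {ℓ : ℕ} (g : Fin ℓ → G)
    (I : Finset (Fin ℓ)) : Prop :=
  I.Nonempty ∧ ∑ i ∈ I, g i = 0 ∧ ∀ J ⊂ I, J.Nonempty → ∑ i ∈ J, g i ≠ 0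

/-- `P` is an irreducible factorization of the indexed multiset `g`: a partition
of the index set all of whose parts are minimal zero-sum. -/
def IsFactorization {G : Type*} [AddCommGroup G] {ℓ : ℕ} (g : Fin ℓ → G)
    (P : Finpartition (Finset.univ : Finset (Fin ℓ))) : Prop :=
  ∀ I ∈ P.parts, IsMinZeroSum g I

/-- `g` is a unique factorization indexed multiset (UFIM) over `G∖{0}`:
all elements are nonzero and there is exactly one irreducible factorization. -/
def IsUFIM {G : Type*} [AddCommGroup G] {ℓ : ℕ} (g : Fin ℓ → G) : Prop :=
  (∀ i, g i ≠ 0) ∧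
  ∃! P : Finpartition (Finset.univ : Finset (Fin ℓ)), IsFactorization g P

/-- The cross number `k(S) = ∑ 1/ord(g_i)`. -/
noncomputable def crossNum {G : Type*} [AddCommGroup G] {ℓ : ℕ} (g : Fin ℓ → G) : ℝ :=
  ∑ i, (1 : ℝ) / (addOrderOf (g i) : ℝ)

/-- `K₁(G)`: the maximal cross number of a UFIM over `G∖{0}`. -/
noncomputable def K1 (G : Type*) [AddCommGroup G] : ℝ :=
  sSup {x : ℝ | ∃ (ℓ : ℕ) (g : Fin ℓ → G), IsUFIM g ∧ crossNum g = x}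

/-- `N₁(G)`: the maximal length of a UFIM over `G∖{0}`. -/
noncomputable def N1 (G : Type*) [AddCommGroup G] : ℕ :=
  sSup {n : ℕ | ∃ g : Fin n → G, IsUFIM g}

/-- `K(G)`: the maximal cross number of a minimal zero-sum indexed multiset over `G∖{0}`. -/
noncomputable def Kcross (G : Type*) [AddCommGroup G] : ℝ :=
  sSup {x : ℝ | ∃ (ℓ : ℕ) (g : Fin ℓ → G), (∀ i, g i ≠ 0) ∧
    IsMinZeroSum g Finset.univ ∧ crossNum g = x}

/-- `g` is zero-sum free: no nonempty subfamily is zero-sum. -/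
def IsZeroSumFree {G : Type*} [AddCommGroup G] {ℓ : ℕ} (g : Fin ℓ → G) : Prop :=
  ∀ I : Finset (Fin ℓ), I.Nonempty → ∑ i ∈ I, g i ≠ 0

/-- The little cross number `k(G)`: the maximal cross number of a zero-sum free
indexed multiset over `G∖{0}`. -/
noncomputable def littleCross (G : Type*) [AddCommGroup G] : ℝ :=
  sSup {x : ℝ | ∃ (ℓ : ℕ) (g : Fin ℓ → G), (∀ i, g i ≠ 0) ∧
    IsZeroSumFree g ∧ crossNum g = x}

/-!
A family has unique factorization iff its zero-sum subfamilies are closed under intersection.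

*Lower bound.* Let `e` have order `p ^ (k + 1)`, and let `H` be a subgroup containing `p • e` but
not `e`. Adjoining the `p` elements `e, …, e, e - p • e` to a family in `H` keeps unique
factorization, and adds `p / p ^ (k + 1) = 1 / p ^ k` to the cross number. Run this
along the chain of cyclic `p`-groups, and once more for the second factor.

*Upper bound.* Take a subfamily which becomes zero-sum after multiplication by `p`, without being
zero-sum itself, and is minimal with this property. Merging it into its sum, an element of
order `p`, keeps unique factorization and does not decrease the cross number, as minimal zero-sum
families in cyclic `p`-groups have cross number at most `1`. Once no such subfamily is left, the
elements of order `p` and the images under `p` of the other ones both have unique factorization.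
The latter lie in a smaller cyclic group, and induction bounds the cross number as soon as one
knows that a family with unique factorization has at most `2 p` elements in `C_p²`, and at
most `p` in `C_p`.

*Families in `C_p²`.* The augmentation ideal `J` of `𝔽_p[C_p²]` satisfies `J ^ (2 p - 1) = 0`, so
a member of `J ^ n` with nonzero constant coefficient forces `n ≤ 2 p - 2`. A minimal zero-sum
family `U` yields such a member for `n = #U - 1`, namely the product of the `1 - X ^ g` over all
but one of its elements, and by unique factorization constant coefficients are multiplicative
across disjoint zero-sum subfamilies. Split off a maximal zero-sum subfamily `V` for which `n = #V`
is possible. What is left has at most two parts, since three disjoint minimal zero-sum families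
either include one for which `n = #U` is possible, or have a union with this property. Each part
costs one unit of `n`, so the family has at most `(2 p - 2) + 2` elements.
-/

section UniqueFactorization

variable {ι κ G H : Type*} [AddCommGroup G] [AddCommGroup H] {g : ι → G} {s U V A : Finset ι}

/-- Zero-sum free subfamilies: the empty subfamily is the only zero-sum one.  This is
`IsZeroSumFree` for a subfamily of a family over an arbitrary index type. -/
def IsZeroSumFreeOn (g : ι → G) (A : Finset ι) : Prop :=
  ∀ I ⊆ A, ∑ i ∈ I, g i = 0 → I = ∅

/-- Minimal zero-sum subfamilies.  This is `IsMinZeroSum` for a family over an arbitrary index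
type, phrased with `Minimal`. -/
def IsMinZeroSumOn (g : ι → G) (U : Finset ι) : Prop :=
  Minimal (fun I ↦ I.Nonempty ∧ ∑ i ∈ I, g i = 0) U

/-- Unique factorization for the zero-sum subfamily `(g i)_{i ∈ s}` of nonzero elements, expressed
without factorizations: the zero-sum subfamilies are closed under intersection.  See
`isUFIM_iff_isUFOn_univ`. -/
structure IsUFOn [DecidableEq ι] (g : ι → G) (s : Finset ι) : Prop where
  ne_zero : ∀ i ∈ s, g i ≠ 0
  sum_eq_zero : ∑ i ∈ s, g i = 0
  sum_inter_eq_zero : ∀ I ⊆ s, ∀ K ⊆ s, ∑ i ∈ I, g i = 0 → ∑ i ∈ K, g i = 0 →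
    ∑ i ∈ I ∩ K, g i = 0

namespace IsMinZeroSumOn

lemma nonempty (h : IsMinZeroSumOn g U) : U.Nonempty := h.prop.1

lemma sum_eq_zero (h : IsMinZeroSumOn g U) : ∑ i ∈ U, g i = 0 := h.prop.2

lemma isZeroSumFreeOn_of_ssubset (h : IsMinZeroSumOn g U) (hA : A ⊂ U) : IsZeroSumFreeOn g A :=
  fun I hI h0 ↦ by
    by_contra hne
    exact h.not_prop_of_lt (hI.trans_ssubset hA) ⟨nonempty_of_ne_empty hne, h0⟩

end IsMinZeroSumOn

lemma exists_isMinZeroSumOn_subset (hV : V.Nonempty) (h0 : ∑ i ∈ V, g i = 0) :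
    ∃ U ⊆ V, IsMinZeroSumOn g U :=
  exists_minimal_le_of_wellFoundedLT (fun I : Finset ι ↦ I.Nonempty ∧ ∑ i ∈ I, g i = 0) V ⟨hV, h0⟩

variable [DecidableEq ι] [DecidableEq κ]

lemma sum_sdiff_eq_zero (h : A ⊆ V) (hA : ∑ i ∈ A, g i = 0) (hV : ∑ i ∈ V, g i = 0) :
    ∑ i ∈ V \ A, g i = 0 := by
  rw [sum_sdiff_eq_sub h, hA, hV, sub_zero]

lemma exists_finpartition_isMinZeroSumOn (g : ι → G) (V : Finset ι) (h0 : ∑ i ∈ V, g i = 0) :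
    ∃ P : Finpartition V, ∀ I ∈ P.parts, IsMinZeroSumOn g I := by
  induction V using Finset.strongInduction with
  | H V ih =>
    rcases V.eq_empty_or_nonempty with rfl | hV
    · exact ⟨Finpartition.empty _, by simp⟩
    obtain ⟨U, hUV, hU⟩ := exists_isMinZeroSumOn_subset hV h0
    obtain ⟨P, hP⟩ := ih (V \ U) (sdiff_ssubset hUV hU.nonempty)
      (sum_sdiff_eq_zero hUV hU.sum_eq_zero h0)
    refine ⟨P.extend hU.nonempty.ne_empty disjoint_sdiff_self_left
      (sdiff_union_of_subset hUV), ?_⟩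
    simpa using ⟨hU, hP⟩

namespace IsUFOn

lemma mono (h : IsUFOn g s) (hA : A ⊆ s) (h0 : ∑ i ∈ A, g i = 0) : IsUFOn g A where
  ne_zero i hi := h.ne_zero i (hA hi)
  sum_eq_zero := h0
  sum_inter_eq_zero I hI K hK := h.sum_inter_eq_zero I (hI.trans hA) K (hK.trans hA)

lemma congr {f : ι → G} (h : IsUFOn g s) (hf : ∀ i ∈ s, g i = f i) : IsUFOn f s where
  ne_zero i hi := hf i hi ▸ h.ne_zero i hi
  sum_eq_zero := sum_congr rfl hf ▸ h.sum_eq_zero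
  sum_inter_eq_zero I hI K hK hI0 hK0 := by
    have hsum : ∀ J ⊆ s, ∑ i ∈ J, g i = ∑ i ∈ J, f i := fun J hJ ↦
      sum_congr rfl fun i hi ↦ hf i (hJ hi)
    rw [← hsum _ (inter_subset_left.trans hI)]
    exact h.sum_inter_eq_zero I hI K hK (hsum I hI ▸ hI0) (hsum K hK ▸ hK0)

lemma sum_eq_zero_of_add (h : IsUFOn g s) (hA : A ⊆ s) (hA0 : ∑ i ∈ A, g i = 0) {I K : Finset ι}
    (hI : I ⊆ A) (hK : K ⊆ s \ A) (h0 : ∑ i ∈ I, g i + ∑ i ∈ K, g i = 0) :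
    ∑ i ∈ I, g i = 0 := by
  have hKA : Disjoint K A := disjoint_sdiff_self_left.mono_left hK
  have hinter : (I ∪ K) ∩ A = I := by
    rw [union_inter_distrib_right, disjoint_iff_inter_eq_empty.1 hKA, union_empty,
      inter_eq_left.2 hI]
  rw [← sum_union (hKA.mono_right hI).symm] at h0
  simpa only [hinter] using h.sum_inter_eq_zero (I ∪ K)
    (union_subset (hI.trans hA) (hK.trans sdiff_subset)) A hA h0 hA0

lemma fiberwise (h : IsUFOn g s) (π : ι → κ) {t : Finset κ} (hπ : ∀ i ∈ s, π i ∈ t)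
    (hne : ∀ k ∈ t, ∑ i ∈ s with π i = k, g i ≠ 0) :
    IsUFOn (fun k ↦ ∑ i ∈ s with π i = k, g i) t where
  ne_zero := hne
  sum_eq_zero := by rw [sum_fiberwise_of_maps_to hπ, h.sum_eq_zero]
  sum_inter_eq_zero I _ K _ := by
    simp only [sum_fiberwise_eq_sum_filter, mem_inter, filter_and]
    exact h.sum_inter_eq_zero _ (filter_subset _ _) _ (filter_subset _ _)

lemma of_comp_injective {F : Type*} [FunLike F G H] [AddMonoidHomClass F G H] (φ : F)
    (hφ : Function.Injective φ) (h : IsUFOn (fun i ↦ φ (g i)) s) : IsUFOn g s := by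
  have hsum (J : Finset ι) : ∑ i ∈ J, φ (g i) = 0 ↔ ∑ i ∈ J, g i = 0 := by
    rw [← map_sum, map_eq_zero_iff φ hφ]
  refine ⟨fun i hi h0 ↦ h.ne_zero i hi (by rw [h0, map_zero]), (hsum s).1 h.sum_eq_zero, ?_⟩
  simpa only [hsum] using h.sum_inter_eq_zero

lemma comp_injective {F : Type*} [FunLike F G H] [AddMonoidHomClass F G H] (φ : F)
    (hφ : Function.Injective φ) (h : IsUFOn g s) : IsUFOn (fun i ↦ φ (g i)) s := by
  have hsum (J : Finset ι) : ∑ i ∈ J, φ (g i) = 0 ↔ ∑ i ∈ J, g i = 0 := by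
    rw [← map_sum, map_eq_zero_iff φ hφ]
  refine ⟨fun i hi ↦ (map_ne_zero_iff φ hφ).2 (h.ne_zero i hi), (hsum s).2 h.sum_eq_zero, ?_⟩
  simpa only [hsum] using h.sum_inter_eq_zero

lemma sumElim {f : κ → G} {t : Finset κ} (hg : IsUFOn g s) (hf : IsUFOn f t)
    (hgf : ∀ I ⊆ s, ∀ J ⊆ t, ∑ i ∈ I, g i + ∑ j ∈ J, f j = 0 → ∑ j ∈ J, f j = 0) :
    IsUFOn (Sum.elim g f) (s.disjSum t) where
  ne_zero := by
    rintro (i | j) h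
    · exact hg.ne_zero i (inl_mem_disjSum.1 h)
    · exact hf.ne_zero j (inr_mem_disjSum.1 h)
  sum_eq_zero := by simp [sum_disjSum, hg.sum_eq_zero, hf.sum_eq_zero]
  sum_inter_eq_zero I hI K hK hI0 hK0 := by
    have hsum (L : Finset (ι ⊕ κ)) :
        ∑ x ∈ L, Sum.elim g f x = ∑ i ∈ L.toLeft, g i + ∑ j ∈ L.toRight, f j := by
      conv_lhs => rw [← L.toLeft_disjSum_toRight, sum_disjSum]
      rfl
    have hsub {L : Finset (ι ⊕ κ)} (hL : L ⊆ s.disjSum t) : L.toLeft ⊆ s ∧ L.toRight ⊆ t :=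
      ⟨by simpa using toLeft_subset_toLeft hL, by simpa using toRight_subset_toRight hL⟩
    rw [hsum] at hI0 hK0
    have hIr := hgf _ (hsub hI).1 _ (hsub hI).2 hI0
    have hKr := hgf _ (hsub hK).1 _ (hsub hK).2 hK0
    rw [hIr, add_zero] at hI0
    rw [hKr, add_zero] at hK0
    rw [hsum, toLeft_inter, toRight_inter,
      hg.sum_inter_eq_zero _ (hsub hI).1 _ (hsub hK).1 hI0 hK0,
      hf.sum_inter_eq_zero _ (hsub hI).2 _ (hsub hK).2 hIr hKr, add_zero]

end IsUFOn

variable {ℓ : ℕ} {x : Fin ℓ → G}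

lemma isMinZeroSum_iff_isMinZeroSumOn {I : Finset (Fin ℓ)} :
    IsMinZeroSum x I ↔ IsMinZeroSumOn x I := by
  simp only [IsMinZeroSum, IsMinZeroSumOn, minimal_iff_forall_lt, and_assoc, not_and]

lemma IsUFIM.mem_parts_of_isMinZeroSumOn (h : IsUFIM x)
    {P : Finpartition (univ : Finset (Fin ℓ))} (hP : IsFactorization x P) {U : Finset (Fin ℓ)}
    (hU : IsMinZeroSumOn x U) : U ∈ P.parts := by
  have h0 : ∑ i, x i = 0 := by
    rw [← P.biUnion_parts, sum_biUnion P.disjoint]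
    exact sum_eq_zero fun I hI ↦ (hP I hI).2.1
  obtain ⟨Q, hQ⟩ := exists_finpartition_isMinZeroSumOn x (univ \ U)
    (sum_sdiff_eq_zero (subset_univ U) hU.sum_eq_zero h0)
  let R := Q.extend hU.nonempty.ne_empty disjoint_sdiff_self_left
    (sdiff_union_of_subset (subset_univ U))
  have hR : IsFactorization x R := fun I hI ↦ isMinZeroSum_iff_isMinZeroSumOn.2 <| by
    rcases mem_insert.1 hI with rfl | hI
    exacts [hU, hQ I hI]
  rw [← h.2.unique hR hP]
  exact mem_insert_self U Q.parts

lemma IsUFIM.isUFOn_univ (h : IsUFIM x) : IsUFOn x univ := by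
  obtain ⟨P, hP, -⟩ := h.2
  have hmin {I U : Finset (Fin ℓ)} (hI : ∑ i ∈ I, x i = 0) (hU : IsMinZeroSumOn x U) :
      ∑ i ∈ U ∩ I, x i = 0 := by
    obtain ⟨Q, hQ⟩ := exists_finpartition_isMinZeroSumOn x I hI
    by_cases hUQ : U ∈ Q.parts
    · rw [inter_eq_left.2 (Q.le hUQ), hU.sum_eq_zero]
    · have hdisj : Disjoint U (Q.parts.biUnion id) := (disjoint_biUnion_right _ _ _).2 fun W hW ↦
        P.disjoint (h.mem_parts_of_isMinZeroSumOn hP hU)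
          (h.mem_parts_of_isMinZeroSumOn hP (hQ W hW)) (by rintro rfl; exact hUQ hW)
      rw [Q.biUnion_parts] at hdisj
      rw [disjoint_iff_inter_eq_empty.1 hdisj, sum_empty]
  refine ⟨fun i _ ↦ h.1 i, ?_, fun I _ K _ hI hK ↦ ?_⟩
  · rw [← P.biUnion_parts, sum_biUnion P.disjoint]
    exact sum_eq_zero fun I hI ↦ (hP I hI).2.1
  · obtain ⟨Q, hQ⟩ := exists_finpartition_isMinZeroSumOn x I hI
    rw [← Q.biUnion_parts, biUnion_inter, sum_biUnion]
    · exact sum_eq_zero fun U hU ↦ hmin hK (hQ U hU)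
    · exact fun U hU W hW hUW ↦ (Q.disjoint hU hW hUW).mono inter_subset_left inter_subset_left

lemma IsUFOn.isUFIM (h : IsUFOn x univ) : IsUFIM x := by
  have hsub {P Q : Finpartition (univ : Finset (Fin ℓ))} (hP : IsFactorization x P)
      (hQ : IsFactorization x Q) : P.parts ⊆ Q.parts := fun I hI ↦ by
    obtain ⟨i, hi⟩ := P.nonempty_of_mem_parts hI
    obtain ⟨J, hJ, hiJ⟩ := Q.exists_mem (mem_univ i)
    have hImin := isMinZeroSum_iff_isMinZeroSumOn.1 (hP I hI)
    have hJmin := isMinZeroSum_iff_isMinZeroSumOn.1 (hQ J hJ)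
    have hIJ : (I ∩ J).Nonempty ∧ ∑ i ∈ I ∩ J, x i = 0 := ⟨⟨i, mem_inter.2 ⟨hi, hiJ⟩⟩,
      h.sum_inter_eq_zero I (subset_univ I) J (subset_univ J) hImin.sum_eq_zero
        hJmin.sum_eq_zero⟩
    rwa [← hImin.eq_of_le hIJ inter_subset_left, hJmin.eq_of_le hIJ inter_subset_right]
  obtain ⟨P, hP⟩ := exists_finpartition_isMinZeroSumOn x univ h.sum_eq_zero
  have hP : IsFactorization x P := fun I hI ↦ isMinZeroSum_iff_isMinZeroSumOn.2 (hP I hI)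
  exact ⟨fun i ↦ h.ne_zero i (mem_univ i), P, hP, fun Q hQ ↦
    Finpartition.ext ((hsub hQ hP).antisymm (hsub hP hQ))⟩

theorem isUFIM_iff_isUFOn_univ : IsUFIM x ↔ IsUFOn x univ :=
  ⟨IsUFIM.isUFOn_univ, IsUFOn.isUFIM⟩

end UniqueFactorization

section GroupAlgebra

open AddMonoidAlgebra

variable {k G : Type*} [CommRing k] [AddCommGroup G]

variable (k) in
/-- The element `1 - X ^ x` of the group algebra. -/
noncomputable def augGen (x : G) : k[G] := 1 - single x 1

variable (k G) in
/-- The augmentation ideal of the group algebra. -/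
noncomputable def augIdeal : Ideal k[G] := Ideal.span (Set.range (augGen k))

variable (k G) in
/-- The linear functional reading off the coefficient of `X ^ 0`. -/
noncomputable def constCoeff : k[G] →ₗ[k] k :=
  Finsupp.lapply 0 ∘ₗ (coeffLinearEquiv k).toLinearMap

lemma constCoeff_single [DecidableEq G] (x : G) :
    constCoeff k G (single x 1) = if x = 0 then 1 else 0 :=
  Finsupp.single_apply

lemma constCoeff_one : constCoeff k G 1 = 1 := by
  classical simp [one_def, constCoeff_single]

lemma augGen_zero : augGen k (0 : G) = 0 := sub_self _

lemma augGen_add (x y : G) :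
    augGen k (x + y) = augGen k x + augGen k y - augGen k x * augGen k y := by
  have : (single (x + y) 1 : k[G]) = single x 1 * single y 1 := by simp
  simp only [augGen, this]
  ring

lemma augGen_mem_augIdeal (x : G) : augGen k x ∈ augIdeal k G :=
  Ideal.subset_span ⟨x, rfl⟩

lemma exists_augGen_nsmul_eq_mul (n : ℕ) (x : G) :
    ∃ y ∈ augIdeal k G, augGen k (n • x) = augGen k x * (n + y) := by
  induction n with
  | zero => exact ⟨0, zero_mem _, by simp [augGen_zero]⟩
  | succ n ih =>
    obtain ⟨y, hy, hn⟩ := ih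
    refine ⟨y - augGen k (n • x), sub_mem hy (augGen_mem_augIdeal _), ?_⟩
    rw [succ_nsmul, augGen_add, hn]
    push_cast
    ring

lemma augGen_dvd_augGen_nsmul (n : ℕ) (x : G) : augGen k x ∣ augGen k (n • x) := by
  obtain ⟨y, -, h⟩ := exists_augGen_nsmul_eq_mul (k := k) n x
  exact ⟨_, h⟩

lemma prod_augGen_mem_augIdeal_pow {ι : Type*} (g : ι → G) (A : Finset ι) :
    ∏ i ∈ A, augGen k (g i) ∈ augIdeal k G ^ #A := by
  rw [← prod_const]
  exact Ideal.prod_mem_prod fun i _ ↦ augGen_mem_augIdeal (g i)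

lemma single_mul_augGen (x y : G) : single x 1 * augGen k y = augGen k (x + y) - augGen k x := by
  simp [augGen, mul_sub]

lemma restrictScalars_augIdeal :
    (augIdeal k G).restrictScalars k = Submodule.span k (Set.range (augGen k)) := by
  refine le_antisymm (fun z hz ↦ ?_) (Submodule.span_le.2 ?_)
  · induction hz using Submodule.span_induction with
    | mem z hz => exact Submodule.subset_span hz
    | zero => exact zero_mem _
    | add z w _ _ hz hw => exact add_mem hz hw
    | smul f z _ hz =>
      have hf : f ∈ Submodule.span k (Set.range (of' k G)) :=
        Submodule.span_mono (Set.image_subset_range _ _) (mem_span_support_coeff f)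
      refine (Submodule.span_mul_span k _ _).trans_le (Submodule.span_le.2 ?_)
        (Submodule.mul_mem_mul hf hz)
      rintro _ ⟨_, ⟨x, rfl⟩, _, ⟨y, rfl⟩, rfl⟩
      change single x 1 * augGen k y ∈ Submodule.span k (Set.range (augGen k))
      rw [single_mul_augGen]
      exact sub_mem (Submodule.subset_span ⟨_, rfl⟩) (Submodule.subset_span ⟨_, rfl⟩)
  · rintro _ ⟨x, rfl⟩
    exact augGen_mem_augIdeal x

lemma augGen_char_pow_nsmul (p : ℕ) [Fact p.Prime] [CharP k p] (n : ℕ) (x : G) :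
    augGen k (p ^ n • x) = augGen k x ^ p ^ n := by
  have : Nontrivial k := CharP.nontrivial_of_char_ne_one (Fact.out : p.Prime).ne_one
  have : CharP k[G] p := charP_of_injective_algebraMap (FaithfulSMul.algebraMap_injective k k[G]) p
  rw [augGen, augGen, sub_pow_char_pow]
  simp

section SubsetSpan

variable {ι : Type*} {g : ι → G} {A B : Finset ι}

variable (k g A) in
/-- The span of the monomials `X ^ ∑ i ∈ I, g i` with `I ⊆ A`. -/
noncomputable def subsetSpan : Submodule k k[G] :=
  Submodule.span k {z | ∃ I ⊆ A, single (∑ i ∈ I, g i) 1 = z}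

lemma subsetSpan_mono (h : A ⊆ B) : subsetSpan k g A ≤ subsetSpan k g B :=
  Submodule.span_mono fun _ ⟨I, hI, hz⟩ ↦ ⟨I, hI.trans h, hz⟩

lemma one_mem_subsetSpan : 1 ∈ subsetSpan k g A :=
  Submodule.subset_span ⟨∅, empty_subset A, by simp [one_def]⟩

lemma constCoeff_mul
    (h : ∀ I ⊆ A, ∀ K ⊆ B, ∑ i ∈ I, g i + ∑ i ∈ K, g i = 0 → ∑ i ∈ I, g i = 0) {a b : k[G]}
    (ha : a ∈ subsetSpan k g A) (hb : b ∈ subsetSpan k g B) :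
    constCoeff k G (a * b) = constCoeff k G a * constCoeff k G b := by
  classical
  induction ha using Submodule.span_induction with
  | zero => simp
  | add x y _ _ hx hy => simp only [add_mul, map_add, hx, hy]
  | smul t x _ hx => simp only [smul_mul_assoc, map_smul, hx]
  | mem x hx =>
    obtain ⟨I, hI, rfl⟩ := hx
    induction hb using Submodule.span_induction with
    | zero => simp
    | add x y _ _ hx hy => simp only [mul_add, map_add, hx, hy]
    | smul t x _ hx => simp only [mul_smul_comm, map_smul, hx]
    | mem y hy =>
      obtain ⟨K, hK, rfl⟩ := hy
      rw [single_mul_single, one_mul, constCoeff_single, constCoeff_single, constCoeff_single]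
      by_cases hI0 : ∑ i ∈ I, g i = 0
      · simp [hI0]
      · simp [hI0, mt (h I hI K hK) hI0]

lemma mul_mem_subsetSpan [DecidableEq ι] (h : Disjoint A B) {a b : k[G]}
    (ha : a ∈ subsetSpan k g A) (hb : b ∈ subsetSpan k g B) : a * b ∈ subsetSpan k g (A ∪ B) := by
  suffices subsetSpan k g A * subsetSpan k g B ≤ subsetSpan k g (A ∪ B) from
    this (Submodule.mul_mem_mul ha hb)
  rw [subsetSpan, subsetSpan, Submodule.span_mul_span]
  apply Submodule.span_mono
  rintro _ ⟨_, ⟨I, hI, rfl⟩, _, ⟨K, hK, rfl⟩, rfl⟩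
  exact ⟨I ∪ K, union_subset_union hI hK, by simp [sum_union (h.mono hI hK)]⟩

lemma prod_augGen_mem_subsetSpan (g : ι → G) (A : Finset ι) :
    ∏ i ∈ A, augGen k (g i) ∈ subsetSpan k g A := by
  classical
  induction A using Finset.induction_on with
  | empty => simpa using one_mem_subsetSpan
  | insert a s ha ih =>
    rw [prod_insert ha, insert_eq]
    refine mul_mem_subsetSpan (by simpa using ha) ?_ ih
    exact sub_mem one_mem_subsetSpan (Submodule.subset_span ⟨{a}, by simp, by simp⟩)

lemma augGen_mem_subsetSpan {a : ι} (ha : a ∈ A) : augGen k (g a) ∈ subsetSpan k g A :=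
  subsetSpan_mono (singleton_subset_iff.2 ha) (by simpa using prod_augGen_mem_subsetSpan g {a})

lemma constCoeff_prod_augGen [DecidableEq G] (g : ι → G) (A : Finset ι) :
    constCoeff k G (∏ i ∈ A, augGen k (g i)) =
      ∑ I ∈ A.powerset with ∑ i ∈ I, g i = 0, (-1) ^ #I := by
  classical
  simp only [augGen]
  rw [prod_sub, map_sum, sum_filter]
  refine sum_congr rfl fun I _ ↦ ?_
  have : (-1) ^ #I * (∏ _i ∈ A \ I, 1) * ∏ i ∈ I, single (g i) (1 : k) =
      (-1 : k) ^ #I • single (∑ i ∈ I, g i) 1 := by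
    rw [prod_const_one, mul_one, prod_single, prod_const_one, Algebra.smul_def, map_pow, map_neg,
      map_one]
  rw [this, map_smul, constCoeff_single, smul_eq_mul, mul_ite, mul_one, mul_zero]

lemma IsZeroSumFreeOn.constCoeff_prod_augGen (h : IsZeroSumFreeOn g A) :
    constCoeff k G (∏ i ∈ A, augGen k (g i)) = 1 := by
  classical
  have : {I ∈ A.powerset | ∑ i ∈ I, g i = 0} = {∅} := by
    ext I
    simp only [mem_filter, mem_powerset, mem_singleton]
    exact ⟨fun hI ↦ h I hI.1 hI.2, by rintro rfl; simp⟩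
  rw [_root_.constCoeff_prod_augGen, this]
  simp

lemma IsMinZeroSumOn.constCoeff_prod_augGen {U : Finset ι} (h : IsMinZeroSumOn g U) :
    constCoeff k G (∏ i ∈ U, augGen k (g i)) = 1 + (-1) ^ #U := by
  classical
  have : {I ∈ U.powerset | ∑ i ∈ I, g i = 0} = {∅, U} := by
    ext I
    simp only [mem_filter, mem_powerset, mem_insert, mem_singleton]
    constructor
    · rintro ⟨hI, h0⟩
      exact I.eq_empty_or_nonempty.imp_right fun hne ↦ h.eq_of_le ⟨hne, h0⟩ hI
    · rintro (rfl | rfl)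
      exacts [by simp, ⟨Subset.rfl, h.sum_eq_zero⟩]
  rw [_root_.constCoeff_prod_augGen, this, sum_pair h.nonempty.ne_empty.symm]
  simp

lemma IsUFOn.constCoeff_mul [DecidableEq ι] {s : Finset ι} (h : IsUFOn g s) (hA : A ⊆ s)
    (hA0 : ∑ i ∈ A, g i = 0) (hB : B ⊆ s \ A) {a b : k[G]} (ha : a ∈ subsetSpan k g A)
    (hb : b ∈ subsetSpan k g B) :
    constCoeff k G (a * b) = constCoeff k G a * constCoeff k G b :=
  _root_.constCoeff_mul (fun _ hI _ hK ↦ h.sum_eq_zero_of_add hA hA0 hI (hK.trans hB)) ha hb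

end SubsetSpan

end GroupAlgebra

section Defect

open AddMonoidAlgebra

variable {k G ι : Type*} [CommRing k] [AddCommGroup G] {g : ι → G} {s U V F : Finset ι} {t : ℕ}

variable (k g) in
/-- `V` has defect at most `t` when some combination `Q` of the monomials `X ^ ∑ i ∈ I, g i`,
`I ⊆ V`, with nonzero constant coefficient lies in the power `#V - t` of the augmentation ideal.
As high powers of that ideal vanish, this bounds `#V`. -/
def DefectLE (V : Finset ι) (t : ℕ) : Prop :=
  ∃ n, ∃ Q ∈ subsetSpan k g V, #V ≤ n + t ∧ Q ∈ augIdeal k G ^ n ∧ constCoeff k G Q ≠ 0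

variable (k g) in
/-- The minimal zero-sum subfamilies obstructing the optimal bound. -/
def IsDefective (U : Finset ι) : Prop := IsMinZeroSumOn g U ∧ ¬ DefectLE k g U 0

lemma DefectLE.card_lt (h : DefectLE k g V t) {n : ℕ} (hn : augIdeal k G ^ n = ⊥) :
    #V < n + t := by
  obtain ⟨m, Q, -, hcard, hQ, hQ0⟩ := h
  by_contra! hle
  have : Q ∈ augIdeal k G ^ n := Ideal.pow_le_pow_right (by omega) hQ
  rw [hn, Ideal.mem_bot] at this
  exact hQ0 (by rw [this, map_zero])

lemma IsDefective.isMinZeroSumOn (h : IsDefective k g U) : IsMinZeroSumOn g U := h.1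

lemma defectLE_empty [Nontrivial k] : DefectLE k g ∅ 0 :=
  ⟨0, 1, one_mem_subsetSpan, by simp, by simp, by simp [constCoeff_one]⟩

lemma IsMinZeroSumOn.defectLE_one [Nontrivial k] (h : IsMinZeroSumOn g U) : DefectLE k g U 1 := by
  classical
  obtain ⟨i, hi⟩ := h.nonempty
  refine ⟨#(U.erase i), _, subsetSpan_mono (erase_subset i U) (prod_augGen_mem_subsetSpan g _),
    (card_erase_add_one hi).ge, prod_augGen_mem_augIdeal_pow g _, ?_⟩
  rw [(h.isZeroSumFreeOn_of_ssubset (erase_ssubset hi)).constCoeff_prod_augGen]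
  exact one_ne_zero

lemma DefectLE.union [DecidableEq ι] [NoZeroDivisors k] {t' : ℕ} (hV : DefectLE k g V t)
    (hU : DefectLE k g U t') (h : IsUFOn g s) (hVs : V ⊆ s) (hV0 : ∑ i ∈ V, g i = 0)
    (hUs : U ⊆ s \ V) : DefectLE k g (V ∪ U) (t + t') := by
  obtain ⟨n, Q, hQ, hcard, hQn, hQ0⟩ := hV
  obtain ⟨n', Q', hQ', hcard', hQn', hQ0'⟩ := hU
  have hd : Disjoint V U := disjoint_sdiff.mono_right hUs
  refine ⟨n + n', Q * Q', mul_mem_subsetSpan hd hQ hQ', ?_, ?_, ?_⟩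
  · rw [card_union_of_disjoint hd]
    omega
  · exact pow_add (augIdeal k G) n n' ▸ Ideal.mul_mem_mul hQn hQn'
  · rw [h.constCoeff_mul hVs hV0 hUs hQ hQ']
    exact mul_ne_zero hQ0 hQ0'

lemma IsUFOn.defectLE_biUnion [DecidableEq ι] [Nontrivial k] [NoZeroDivisors k]
    (h : IsUFOn g s) {𝒰 : Finset (Finset ι)} (hs : ∀ U ∈ 𝒰, U ⊆ s)
    (hmin : ∀ U ∈ 𝒰, IsMinZeroSumOn g U)
    (hdisj : (𝒰 : Set (Finset ι)).PairwiseDisjoint id) : DefectLE k g (𝒰.biUnion id) #𝒰 := by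
  induction 𝒰 using Finset.induction_on with
  | empty => exact defectLE_empty
  | insert U 𝒰 hU ih =>
    simp only [forall_mem_insert] at hs hmin
    rw [coe_insert, Set.pairwiseDisjoint_insert_of_notMem (mod_cast hU)] at hdisj
    rw [biUnion_insert, card_insert_of_notMem hU, add_comm]
    exact hmin.1.defectLE_one.union (ih hs.2 hmin.2 hdisj.1) h hs.1 hmin.1.sum_eq_zero
      (subset_sdiff.2 ⟨biUnion_subset.2 hs.2,
        ((disjoint_biUnion_right _ _ _).2 fun V hV ↦ hdisj.2 V hV).symm⟩)

lemma defectLE_zero_of_mem_augIdeal_pow [DecidableEq ι] {w : k[G]} (hF : F ⊆ V)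
    (hw : w ∈ subsetSpan k g F) (hwF : w ∈ augIdeal k G ^ #F)
    (h0 : constCoeff k G (w * ∏ i ∈ V \ F, augGen k (g i)) ≠ 0) : DefectLE k g V 0 := by
  refine ⟨#F + #(V \ F), _, ?_, ?_, ?_, h0⟩
  · have := mul_mem_subsetSpan disjoint_sdiff hw (prod_augGen_mem_subsetSpan g (V \ F))
    rwa [union_sdiff_of_subset hF] at this
  · rw [add_comm #F, card_sdiff_add_card_eq_card hF, add_zero]
  · exact pow_add (augIdeal k G) _ _ ▸ Ideal.mul_mem_mul hwF (prod_augGen_mem_augIdeal_pow g _)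

lemma prod_mul_prod_sdiff [DecidableEq ι] {M : Type*} [CommMonoid M] (f : ι → M) {K : Finset ι}
    (hK : K ⊆ F) : (∏ i ∈ K, f i) * ∏ i ∈ V \ F, f i = ∏ i ∈ K ∪ V \ F, f i :=
  (prod_union (disjoint_sdiff.mono_left hK)).symm

namespace IsDefective

lemma one_add_neg_one_pow_card_eq_zero (h : IsDefective k g U) : (1 : k) + (-1) ^ #U = 0 := by
  classical
  by_contra h0
  refine h.2 (defectLE_zero_of_mem_augIdeal_pow (empty_subset U) one_mem_subsetSpan (by simp) ?_)
  rwa [one_mul, sdiff_empty, h.isMinZeroSumOn.constCoeff_prod_augGen]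

lemma eq_one_of_sub_smul_mem (h : IsDefective k g U) {a b : ι} (ha : a ∈ U) (hb : b ∈ U)
    (hab : a ≠ b) {r : k} (hr : augGen k (g a) - r • augGen k (g b) ∈ augIdeal k G ^ 2) :
    r = 1 := by
  classical
  by_contra hr1
  have hF : ({a, b} : Finset ι) ⊆ U := by simp [insert_subset_iff, ha, hb]
  have hfree {c d : ι} (hd : d ∈ U) (hcF : c ∈ ({a, b} : Finset ι))
      (hdF : d ∈ ({a, b} : Finset ι)) (hcd : d ≠ c) :
      constCoeff k G (augGen k (g c) * ∏ i ∈ U \ {a, b}, augGen k (g i)) = 1 := by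
    rw [← prod_singleton (fun i ↦ augGen k (g i)) c,
      prod_mul_prod_sdiff _ (singleton_subset_iff.2 hcF)]
    have hsub : {c} ∪ U \ {a, b} ⊆ U.erase d := subset_erase.2
      ⟨union_subset (singleton_subset_iff.2 (hF hcF)) sdiff_subset, by
        rw [mem_union, mem_singleton, mem_sdiff]; tauto⟩
    exact (h.isMinZeroSumOn.isZeroSumFreeOn_of_ssubset
      (hsub.trans_ssubset (erase_ssubset hd))).constCoeff_prod_augGen
  refine h.2 (defectLE_zero_of_mem_augIdeal_pow hF (sub_mem (augGen_mem_subsetSpan (by simp))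
    (Submodule.smul_mem _ r (augGen_mem_subsetSpan (by simp)))) (card_pair hab ▸ hr) ?_)
  rw [sub_mul, smul_mul_assoc, map_sub, map_smul, hfree hb (by simp) (by simp) hab.symm,
    hfree ha (by simp) (by simp) hab, smul_eq_mul, mul_one]
  exact sub_ne_zero.2 (Ne.symm hr1)

end IsDefective

variable [DecidableEq ι]

lemma IsUFOn.isZeroSumFreeOn (h : IsUFOn g s) {K : Finset ι} (hK : K ⊆ s)
    (hcover : ∀ i ∈ K, ∃ U ⊆ s, i ∈ U ∧ IsMinZeroSumOn g U ∧ ¬ U ⊆ K) : IsZeroSumFreeOn g K := by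
  intro I hI hI0
  by_contra hne
  obtain ⟨i, hi⟩ := nonempty_of_ne_empty hne
  obtain ⟨U, hU, hiU, hmin, hUK⟩ := hcover i (hI hi)
  have hIU := hmin.eq_of_le ⟨⟨i, mem_inter.2 ⟨hi, hiU⟩⟩,
    h.sum_inter_eq_zero I (hI.trans hK) U hU hI0 hmin.sum_eq_zero⟩ inter_subset_right
  exact hUK ((inter_eq_right.1 hIU).trans hI)

lemma IsUFOn.constCoeff_prod_augGen_eq_zero (h : IsUFOn g s) {K : Finset ι} (hK : K ⊆ s)
    (hUK : U ⊆ K) (hU : IsDefective k g U) : constCoeff k G (∏ i ∈ K, augGen k (g i)) = 0 := by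
  have hUmin := hU.isMinZeroSumOn
  rw [← prod_sdiff hUK, mul_comm, h.constCoeff_mul (hUK.trans hK) hUmin.sum_eq_zero
    (sdiff_subset_sdiff hK Subset.rfl) (prod_augGen_mem_subsetSpan g U)
    (prod_augGen_mem_subsetSpan g _), hUmin.constCoeff_prod_augGen,
    hU.one_add_neg_one_pow_card_eq_zero, zero_mul]

variable (k g F V) in
/-- For `F ⊆ V`, the sum of the power `#F` of the augmentation ideal and of the combinations of the
monomials `X ^ ∑ i ∈ I, g i`, `I ⊆ F`, whose product with `∏ i ∈ V \ F, augGen k (g i)` has constant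
coefficient zero.  See `prod_augGen_mem_nullSpan_iff`. -/
noncomputable def nullSpan : Submodule k k[G] :=
  (augIdeal k G ^ #F).restrictScalars k ⊔ (subsetSpan k g F ⊓
    LinearMap.ker (constCoeff k G ∘ₗ LinearMap.mulRight k (∏ i ∈ V \ F, augGen k (g i))))

lemma mem_nullSpan_of_mem_augIdeal_pow {z : k[G]} (hz : z ∈ augIdeal k G ^ #F) :
    z ∈ nullSpan k g V F :=
  Submodule.mem_sup_left hz

lemma prod_augGen_mem_nullSpan_iff (hV : ¬ DefectLE k g V 0) (hF : F ⊆ V) {K : Finset ι}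
    (hK : K ⊆ F) : ∏ i ∈ K, augGen k (g i) ∈ nullSpan k g V F ↔
      constCoeff k G (∏ i ∈ K ∪ V \ F, augGen k (g i)) = 0 := by
  rw [← prod_mul_prod_sdiff _ hK]
  have hKF : ∏ i ∈ K, augGen k (g i) ∈ subsetSpan k g F :=
    subsetSpan_mono hK (prod_augGen_mem_subsetSpan g K)
  refine ⟨fun h ↦ ?_, fun h ↦ Submodule.mem_sup_right ⟨hKF, h⟩⟩
  obtain ⟨q, hq, r, ⟨hrF, hr⟩, hqr⟩ := Submodule.mem_sup.1 h
  have hr0 : constCoeff k G (r * ∏ i ∈ V \ F, augGen k (g i)) = 0 := hr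
  have hqF : q ∈ subsetSpan k g F := eq_sub_of_add_eq hqr ▸ sub_mem hKF hrF
  by_contra h0
  refine hV (defectLE_zero_of_mem_augIdeal_pow hF hqF hq ?_)
  rwa [← hqr, add_mul, map_add, hr0, add_zero] at h0

lemma IsUFOn.prod_augGen_mem_nullSpan_iff [Nontrivial k] (h : IsUFOn g s)
    {𝒰 : Finset (Finset ι)} (hs : ∀ U ∈ 𝒰, U ⊆ s) (hdef : ∀ U ∈ 𝒰, IsDefective k g U)
    (hV : ¬ DefectLE k g (𝒰.biUnion id) 0) (hF : F ⊆ 𝒰.biUnion id) {K : Finset ι} (hK : K ⊆ F) :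
    ∏ i ∈ K, augGen k (g i) ∈ nullSpan k g (𝒰.biUnion id) F ↔ ∃ U ∈ 𝒰, U ∩ F ⊆ K := by
  have hsub : K ∪ 𝒰.biUnion id \ F ⊆ 𝒰.biUnion id := union_subset (hK.trans hF) sdiff_subset
  have hKs := hsub.trans (biUnion_subset.2 hs)
  have hiff {U} (hU : U ∈ 𝒰) : U ⊆ K ∪ 𝒰.biUnion id \ F ↔ U ∩ F ⊆ K := by
    have := subset_biUnion_of_mem id hU
    grind
  rw [_root_.prod_augGen_mem_nullSpan_iff hV hF hK]
  refine ⟨fun h0 ↦ ?_, fun ⟨U, hU, hUK⟩ ↦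
    h.constCoeff_prod_augGen_eq_zero hKs ((hiff hU).2 hUK) (hdef U hU)⟩
  by_contra! hne
  refine one_ne_zero (α := k) ?_
  rw [← h0, (h.isZeroSumFreeOn hKs fun i hi ↦ ?_).constCoeff_prod_augGen]
  obtain ⟨U, hU, hiU⟩ := mem_biUnion.1 (hsub hi)
  exact ⟨U, hs U hU, hiU, (hdef U hU).isMinZeroSumOn, mt (hiff hU).1 (hne U hU)⟩

end Defect

section Wedge

variable {K : Type*} [Field K] {u v w : K × K}

/-- The determinant form on the plane: `wedge v w = 0` says that `v` and `w` are parallel. -/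
def wedge : K × K →ₗ[K] K × K →ₗ[K] K :=
  LinearMap.mk₂ K (fun v w ↦ v.1 * w.2 - v.2 * w.1)
    (fun _ _ _ ↦ by simp only [Prod.fst_add, Prod.snd_add]; ring)
    (fun _ _ _ ↦ by simp only [Prod.smul_fst, Prod.smul_snd, smul_eq_mul]; ring)
    (fun _ _ _ ↦ by simp only [Prod.fst_add, Prod.snd_add]; ring)
    (fun _ _ _ ↦ by simp only [Prod.smul_fst, Prod.smul_snd, smul_eq_mul]; ring)

lemma wedge_apply (v w : K × K) : wedge v w = v.1 * w.2 - v.2 * w.1 := rfl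

lemma wedge_self (v : K × K) : wedge v v = 0 := by
  rw [wedge_apply, mul_comm, sub_self]

lemma wedge_eq_zero_comm : wedge v w = 0 ↔ wedge w v = 0 := by
  have : wedge v w = -wedge w v := by simp only [wedge_apply]; ring
  rw [this, neg_eq_zero]

lemma eq_smul_add_smul_of_wedge_ne_zero (h : wedge u v ≠ 0) (w : K × K) :
    w = (wedge w v / wedge u v) • u + (wedge u w / wedge u v) • v := by
  have hcramer : wedge u v • w = wedge w v • u + wedge u w • v := by
    ext <;> simp only [wedge_apply, Prod.fst_add, Prod.snd_add, Prod.smul_fst, Prod.smul_snd,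
      smul_eq_mul] <;> ring
  rw [div_eq_inv_mul, div_eq_inv_mul, mul_smul, mul_smul, ← smul_add, ← hcramer,
    inv_smul_smul₀ h]

lemma eq_zero_of_wedge_eq_zero (h : wedge u v ≠ 0) (hu : wedge w u = 0) (hv : wedge w v = 0) :
    w = 0 := by
  rw [eq_smul_add_smul_of_wedge_ne_zero h w, hv, wedge_eq_zero_comm.1 hu]
  simp

lemma exists_eq_smul_of_wedge_eq_zero (hw : w ≠ 0) (h : wedge v w = 0) : ∃ t : K, v = t • w := by
  obtain ⟨e, he⟩ : ∃ e, wedge w e ≠ 0 := by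
    by_contra! h0
    have h1 := h0 (1, 0)
    have h2 := h0 (0, 1)
    simp only [wedge_apply, mul_zero, mul_one, zero_sub, neg_eq_zero, sub_zero] at h1 h2
    exact hw (Prod.ext h2 h1)
  refine ⟨wedge v e / wedge w e, ?_⟩
  conv_lhs => rw [eq_smul_add_smul_of_wedge_ne_zero he v, wedge_eq_zero_comm.1 h]
  simp

lemma wedge_eq_zero_trans (hv : v ≠ 0) (huv : wedge u v = 0) (hvw : wedge v w = 0) :
    wedge u w = 0 := by
  obtain ⟨t, rfl⟩ := exists_eq_smul_of_wedge_eq_zero hv huv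
  rw [map_smul, LinearMap.smul_apply, hvw, smul_zero]

end Wedge

section PrimeField

open AddMonoidAlgebra

variable {p : ℕ} [Fact p.Prime]

local notation "𝐱" => augGen (ZMod p)

section Module

variable {G : Type*} [AddCommGroup G] [Module (ZMod p) G]

lemma exists_augGen_smul_eq_add_mul (α : ZMod p) (x : G) :
    ∃ y ∈ augIdeal (ZMod p) G, 𝐱 (α • x) = α • 𝐱 x + 𝐱 x * y := by
  obtain ⟨y, hy, h⟩ := exists_augGen_nsmul_eq_mul (k := ZMod p) α.val x
  refine ⟨y, hy, ?_⟩
  rw [← Nat.cast_smul_eq_nsmul (ZMod p), ZMod.natCast_zmod_val] at h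
  rw [h, mul_add, ← nsmul_eq_mul', ← Nat.cast_smul_eq_nsmul (ZMod p), ZMod.natCast_zmod_val]

lemma augGen_smul_add_smul_sub_mem (α β : ZMod p) (x y : G) :
    𝐱 (α • x + β • y) - (α • 𝐱 x + β • 𝐱 y) ∈ augIdeal (ZMod p) G ^ 2 := by
  obtain ⟨u, hu, hx⟩ := exists_augGen_smul_eq_add_mul α x
  obtain ⟨v, hv, hy⟩ := exists_augGen_smul_eq_add_mul β y
  have : 𝐱 (α • x + β • y) - (α • 𝐱 x + β • 𝐱 y) =
      𝐱 x * u + 𝐱 y * v - 𝐱 (α • x) * 𝐱 (β • y) := by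
    rw [augGen_add, hx, hy]
    ring
  rw [this, pow_two]
  have hmem (z : G) := augGen_mem_augIdeal (k := ZMod p) z
  exact sub_mem (add_mem (Ideal.mul_mem_mul (hmem x) hu) (Ideal.mul_mem_mul (hmem y) hv))
    (Ideal.mul_mem_mul (hmem _) (hmem _))

end Module

variable {a b c d : ZMod p × ZMod p}

local notation "𝐉" => augIdeal (ZMod p) (ZMod p × ZMod p)

lemma mul_mem_pow_of_add_eq {R : Type*} [CommSemiring R] {I : Ideal R} {x y : R} {m n l : ℕ}
    (h : m + n = l) (hx : x ∈ I ^ m) (hy : y ∈ I ^ n) : x * y ∈ I ^ l :=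
  h ▸ pow_add I m n ▸ Ideal.mul_mem_mul hx hy

lemma augIdeal_pow_eq_bot : 𝐉 ^ (2 * p - 1) = ⊥ := by
  let I (v : ZMod p × ZMod p) : Ideal (ZMod p)[ZMod p × ZMod p] := Ideal.span {𝐱 v}
  have hI (v : ZMod p × ZMod p) : I v ^ p = 0 := by
    have : 𝐱 v ^ p = 0 := by
      have hv : p • v = 0 := by ext <;> simp
      simpa [hv, augGen_zero] using (augGen_char_pow_nsmul (k := ZMod p) p 1 v).symm
    rw [Ideal.span_singleton_pow, this, Ideal.zero_eq_bot, Ideal.span_singleton_zero]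
  have hsmul (α : ZMod p) (v : ZMod p × ZMod p) : 𝐱 (α • v) ∈ I v :=
    Ideal.mem_span_singleton.2 <| by
      simpa [← Nat.cast_smul_eq_nsmul (ZMod p)] using
        augGen_dvd_augGen_nsmul (k := ZMod p) α.val v
  have hJ : 𝐉 ≤ I (1, 0) + I (0, 1) := by
    rw [augIdeal, Ideal.span_le]
    rintro _ ⟨v, rfl⟩
    have hv : v = v.1 • (1, 0) + v.2 • (0, 1) := by ext <;> simp
    have h1 := Submodule.mem_sup_left (T := I (0, 1)) (hsmul v.1 (1, 0))
    have h2 := Submodule.mem_sup_right (S := I (1, 0)) (hsmul v.2 (0, 1))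
    rw [SetLike.mem_coe, hv, augGen_add]
    exact sub_mem (add_mem h1 h2) (Ideal.mul_mem_right _ _ h1)
  rw [eq_bot_iff, ← Ideal.zero_eq_bot]
  refine (Ideal.pow_right_mono hJ _).trans_eq ?_
  rw [add_pow]
  refine sum_eq_zero fun i _ ↦ ?_
  obtain h | h : p ≤ i ∨ p ≤ 2 * p - 1 - i := by omega
  · rw [pow_eq_zero_of_le h (hI _), zero_mul, zero_mul]
  · rw [pow_eq_zero_of_le h (hI _), mul_zero, zero_mul]

variable {M : Submodule (ZMod p) (ZMod p)[ZMod p × ZMod p]} {r : (ZMod p)[ZMod p × ZMod p]}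

lemma mul_mem_of_mem_augIdeal (h2 : ∀ z ∈ 𝐉 ^ 2, r * z ∈ M) (hab : wedge a b ≠ 0)
    (ha : r * 𝐱 a ∈ M) (hb : r * 𝐱 b ∈ M) : ∀ z ∈ 𝐉, r * z ∈ M := by
  suffices 𝐉.restrictScalars (ZMod p) ≤
    M.comap (LinearMap.mulLeft (ZMod p) r) from this
  rw [restrictScalars_augIdeal, Submodule.span_le]
  rintro _ ⟨v, rfl⟩
  have hlin := h2 _ (augGen_smul_add_smul_sub_mem (wedge v b / wedge a b)
    (wedge a v / wedge a b) a b)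
  rw [← eq_smul_add_smul_of_wedge_ne_zero hab v, mul_sub, mul_add, mul_smul_comm,
    mul_smul_comm] at hlin
  exact (M.sub_mem_iff_left (add_mem (M.smul_mem _ ha) (M.smul_mem _ hb))).1 hlin

lemma mul_mem_of_mem_augIdeal_sq (h3 : ∀ z ∈ 𝐉 ^ 3, r * z ∈ M) (hab : wedge a b ≠ 0)
    (maa : r * (𝐱 a * 𝐱 a) ∈ M) (mab : r * (𝐱 a * 𝐱 b) ∈ M) (mbb : r * (𝐱 b * 𝐱 b) ∈ M) :
    ∀ z ∈ 𝐉 ^ 2, r * z ∈ M := by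
  have hmul {y} (hy : y ∈ 𝐉) (ha : r * (y * 𝐱 a) ∈ M) (hb : r * (y * 𝐱 b) ∈ M) :
      ∀ z ∈ 𝐉, r * (y * z) ∈ M := by
    simp only [← mul_assoc] at ha hb ⊢
    refine mul_mem_of_mem_augIdeal (fun z hz ↦ ?_) hab ha hb
    rw [mul_assoc]
    exact h3 _ (mul_mem_pow_of_add_eq (m := 1) (by norm_num) (by rwa [pow_one]) hz)
  have mba : r * (𝐱 b * 𝐱 a) ∈ M := by rwa [mul_comm (𝐱 b)]
  intro z hz
  rw [pow_two] at hz
  refine Submodule.mul_induction_on hz (fun y hy z hz ↦ hmul hy ?_ ?_ z hz) fun y z hy hz ↦ ?_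
  · rw [mul_comm y]
    exact hmul (augGen_mem_augIdeal a) maa mab y hy
  · rw [mul_comm y]
    exact hmul (augGen_mem_augIdeal b) mba mbb y hy
  · rw [mul_add]
    exact add_mem hy hz

lemma mul_mem_of_augGen_products (h4 : ∀ z ∈ 𝐉 ^ 4, z ∈ M) (hac : wedge a c ≠ 0)
    (had : wedge a d ≠ 0) (hcd : wedge c d ≠ 0) (mab : 𝐱 a * 𝐱 b ∈ M) (mbc : 𝐱 b * 𝐱 c ∈ M)
    (mabc : 𝐱 a * 𝐱 b * 𝐱 c ∈ M) (mabd : 𝐱 a * 𝐱 b * 𝐱 d ∈ M) (mbcd : 𝐱 b * 𝐱 c * 𝐱 d ∈ M) :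
    ∀ z ∈ 𝐉, 𝐱 b * z ∈ M := by
  have hx := augGen_mem_augIdeal (k := ZMod p) (G := ZMod p × ZMod p)
  have hx1 (v : ZMod p × ZMod p) : 𝐱 v ∈ 𝐉 ^ 1 := by simpa using hx v
  have hx2 (v w : ZMod p × ZMod p) : 𝐱 v * 𝐱 w ∈ 𝐉 ^ 2 :=
    mul_mem_pow_of_add_eq rfl (hx1 v) (hx1 w)
  have hab : ∀ z ∈ 𝐉, 𝐱 a * 𝐱 b * z ∈ M := mul_mem_of_mem_augIdeal
    (fun z hz ↦ h4 _ (mul_mem_pow_of_add_eq rfl (hx2 a b) hz)) hcd mabc mabd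
  have hbc : ∀ z ∈ 𝐉, 𝐱 b * 𝐱 c * z ∈ M := mul_mem_of_mem_augIdeal
    (fun z hz ↦ h4 _ (mul_mem_pow_of_add_eq rfl (hx2 b c) hz)) had
    (by convert mabc using 1; ring) mbcd
  have hb : ∀ z ∈ 𝐉 ^ 2, 𝐱 b * z ∈ M := mul_mem_of_mem_augIdeal_sq
    (fun z hz ↦ h4 _ (mul_mem_pow_of_add_eq rfl (hx1 b) hz)) hac
    (by convert hab _ (hx a) using 1; ring) (by convert mabc using 1; ring)
    (by convert hbc _ (hx c) using 1; ring)
  exact mul_mem_of_mem_augIdeal hb hac (by rwa [mul_comm]) mbc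

lemma mem_of_mem_augIdeal_of_augGen_products (h4 : ∀ z ∈ 𝐉 ^ 4, z ∈ M)
    (hab : wedge a b ≠ 0) (hcb : wedge c b ≠ 0) (hdb : wedge d b ≠ 0) (hcd : wedge c d ≠ 0)
    (mc : 𝐱 c ∈ M) (md : 𝐱 d ∈ M) (mac : 𝐱 a * 𝐱 c ∈ M) (macd : 𝐱 a * 𝐱 c * 𝐱 d ∈ M)
    (hb : ∀ z ∈ 𝐉, 𝐱 b * z ∈ M) : ∀ z ∈ 𝐉, z ∈ M := by
  have hx := augGen_mem_augIdeal (k := ZMod p) (G := ZMod p × ZMod p)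
  have hx1 {z} (hz : z ∈ 𝐉) : z ∈ 𝐉 ^ 1 := by rwa [pow_one]
  have hx2 {y z} (hy : y ∈ 𝐉) (hz : z ∈ 𝐉) : y * z ∈ 𝐉 ^ 2 :=
    mul_mem_pow_of_add_eq rfl (hx1 hy) (hx1 hz)
  have hbb (y z) (hz : z ∈ 𝐉) : y * z * 𝐱 b ∈ M := by
    rw [mul_comm]
    exact hb _ (Ideal.mul_mem_left _ y hz)
  have hac : ∀ z ∈ 𝐉, 𝐱 a * 𝐱 c * z ∈ M := mul_mem_of_mem_augIdeal
    (fun z hz ↦ h4 _ (mul_mem_pow_of_add_eq rfl (hx2 (hx a) (hx c)) hz)) hdb macd (hbb _ _ (hx c))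
  have haa : ∀ z ∈ 𝐉, 𝐱 a * 𝐱 a * z ∈ M := mul_mem_of_mem_augIdeal
    (fun z hz ↦ h4 _ (mul_mem_pow_of_add_eq rfl (hx2 (hx a) (hx a)) hz)) hcb
    (by convert hac _ (hx a) using 1; ring) (hbb _ _ (hx a))
  have h3 {y} (hy : y ∈ 𝐉) : ∀ z ∈ 𝐉 ^ 2, y * z ∈ M := mul_mem_of_mem_augIdeal_sq
    (fun z hz ↦ h4 _ (mul_mem_pow_of_add_eq rfl (hx1 hy) hz)) hab
    (by rw [mul_comm]; exact haa y hy) (by rw [← mul_assoc]; exact hbb _ _ (hx a))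
    (by rw [← mul_assoc]; exact hbb _ _ (hx b))
  have ha : ∀ z ∈ 𝐉, 𝐱 a * z ∈ M :=
    mul_mem_of_mem_augIdeal (h3 (hx a)) hcb mac (mul_comm (𝐱 b) (𝐱 a) ▸ hb _ (hx a))
  have h2 {y} (hy : y ∈ 𝐉) : ∀ z ∈ 𝐉, y * z ∈ M := mul_mem_of_mem_augIdeal (h3 hy) hab
    (by rw [mul_comm]; exact ha y hy) (by rw [mul_comm]; exact hb y hy)
  have h1 : ∀ z ∈ 𝐉, 1 * z ∈ M := by
    refine mul_mem_of_mem_augIdeal (fun z hz ↦ ?_) hcd (by rwa [one_mul]) (by rwa [one_mul])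
    rw [one_mul]
    rw [pow_two] at hz
    exact Submodule.mul_induction_on hz (fun y hy z hz ↦ h2 hy z hz) fun _ _ ↦ add_mem
  exact fun z hz ↦ one_mul z ▸ h1 z hz

/-- The products assumed to lie in `M` are over sets `K ⊆ {a, b, c, d}` which contain `{a, b}`,
`{c}` or `{d}`; the conclusion contradicts that `M` contains no other such product. -/
lemma augGen_mem_or_augGen_mem (h4 : ∀ z ∈ 𝐉 ^ 4, z ∈ M) (hab : wedge a b ≠ 0)
    (hac : wedge a c ≠ 0) (had : wedge a d ≠ 0) (hcd : wedge c d ≠ 0) (mc : 𝐱 c ∈ M)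
    (md : 𝐱 d ∈ M) (mab : 𝐱 a * 𝐱 b ∈ M) (mac : 𝐱 a * 𝐱 c ∈ M) (mbc : 𝐱 b * 𝐱 c ∈ M)
    (mabc : 𝐱 a * 𝐱 b * 𝐱 c ∈ M) (mabd : 𝐱 a * 𝐱 b * 𝐱 d ∈ M) (macd : 𝐱 a * 𝐱 c * 𝐱 d ∈ M)
    (mbcd : 𝐱 b * 𝐱 c * 𝐱 d ∈ M) : 𝐱 a ∈ M ∨ 𝐱 b ∈ M := by
  have hb := mul_mem_of_augGen_products h4 hac had hcd mab mbc mabc mabd mbcd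
  have hb0 : b ≠ 0 := by rintro rfl; exact hab (map_zero _)
  have hparallel {v} (mv : 𝐱 v ∈ M) (hav : wedge a v ≠ 0) (hvb : wedge v b = 0) : 𝐱 b ∈ M := by
    obtain ⟨t, rfl⟩ := exists_eq_smul_of_wedge_eq_zero hb0 hvb
    have ht : t ≠ 0 := by rintro rfl; simp at hav
    obtain ⟨y, hy, htb⟩ := exists_augGen_smul_eq_add_mul t b
    rw [htb, M.add_mem_iff_left (hb y hy)] at mv
    exact (M.smul_mem_iff ht).1 mv
  by_cases hcb : wedge c b = 0
  · exact Or.inr (hparallel mc hac hcb)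
  by_cases hdb : wedge d b = 0
  · exact Or.inr (hparallel md had hdb)
  exact Or.inl (mem_of_mem_augIdeal_of_augGen_products h4 hab hcb hdb hcd mc md mac macd hb _
    (augGen_mem_augIdeal a))

end PrimeField

section RankTwo

open AddMonoidAlgebra

variable {p : ℕ} [Fact p.Prime] {ι : Type*} {g : ι → ZMod p × ZMod p} {s U U₁ U₂ U₃ : Finset ι}

/-- Subfamilies of the plane that are not contained in a line through the origin. -/
def IsNoncollinear (g : ι → ZMod p × ZMod p) (U : Finset ι) : Prop :=
  ∃ a ∈ U, ∃ b ∈ U, wedge (g a) (g b) ≠ 0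

lemma IsNoncollinear.exists_wedge_ne_zero (h : IsNoncollinear g U) {v : ZMod p × ZMod p}
    (hv : v ≠ 0) : ∃ i ∈ U, wedge (g i) v ≠ 0 := by
  obtain ⟨a, ha, b, hb, hab⟩ := h
  by_contra! h0
  exact hab (wedge_eq_zero_trans hv (h0 a ha) (wedge_eq_zero_comm.1 (h0 b hb)))

lemma IsNoncollinear.exists_wedge_ne_zero_and_ne_zero (h : IsNoncollinear g U)
    (hU : IsMinZeroSumOn g U) {v w : ZMod p × ZMod p} (hvw : wedge v w ≠ 0) :
    ∃ i ∈ U, wedge (g i) v ≠ 0 ∧ wedge (g i) w ≠ 0 := by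
  by_contra! h0
  have hv : v ≠ 0 := by rintro rfl; simp at hvw
  have hw : w ≠ 0 := by rintro rfl; simp at hvw
  let A := {i ∈ U | wedge (g i) v = 0}
  have hA : ∑ i ∈ A, g i = 0 := by
    refine eq_zero_of_wedge_eq_zero hvw ?_ ?_
    · rw [map_sum, LinearMap.sum_apply]
      exact sum_eq_zero fun i hi ↦ (mem_filter.1 hi).2
    · have hsum := sum_filter_add_sum_filter_not U (fun i ↦ wedge (g i) v = 0) g
      rw [hU.sum_eq_zero] at hsum
      rw [eq_neg_of_add_eq_zero_left hsum, map_neg, map_sum, LinearMap.neg_apply,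
        LinearMap.sum_apply, sum_eq_zero, neg_zero]
      exact fun i hi ↦ h0 i (mem_filter.1 hi).1 (mem_filter.1 hi).2
  rcases A.eq_empty_or_nonempty with hAe | hAne
  · obtain ⟨i, hi, hiw⟩ := h.exists_wedge_ne_zero hw
    exact hiw (h0 i hi (filter_eq_empty_iff.1 hAe hi))
  · obtain ⟨i, hi, hiv⟩ := h.exists_wedge_ne_zero hv
    rw [← hU.eq_of_le ⟨hAne, hA⟩ (filter_subset _ U)] at hi
    exact hiv (mem_filter.1 hi).2

lemma IsDefective.eq_of_wedge_eq_zero (hU : IsDefective (ZMod p) g U) {a b : ι} (ha : a ∈ U)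
    (hb : b ∈ U) (hb0 : g b ≠ 0) (hab : wedge (g a) (g b) = 0) : g a = g b := by
  classical
  obtain rfl | hne := eq_or_ne a b
  · rfl
  obtain ⟨t, ht⟩ := exists_eq_smul_of_wedge_eq_zero hb0 hab
  suffices t = 1 by rw [ht, this, one_smul]
  refine hU.eq_one_of_sub_smul_mem ha hb hne ?_
  simpa [ht, augGen_zero] using augGen_smul_add_smul_sub_mem t 0 (g b) 0

lemma IsDefective.exists_sum_eq_smul (hU : IsDefective (ZMod p) g U) (h0 : ∀ i ∈ U, g i ≠ 0)
    (hcol : ¬ IsNoncollinear g U) {a : ι} (ha : a ∈ U) (t : ZMod p) :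
    ∃ I ⊆ U, ∑ i ∈ I, g i = t • g a := by
  have hconst : ∀ i ∈ U, g i = g a := fun i hi ↦ hU.eq_of_wedge_eq_zero hi ha (h0 a ha) <| by
    by_contra hne
    exact hcol ⟨i, hi, a, ha, hne⟩
  have hsum {I : Finset ι} (hI : I ⊆ U) : ∑ i ∈ I, g i = (#I : ZMod p) • g a := by
    rw [sum_congr rfl fun i hi ↦ hconst i (hI hi), sum_const, Nat.cast_smul_eq_nsmul]
  have hdvd : (#U : ZMod p) = 0 := by
    have := hsum Subset.rfl ▸ hU.isMinZeroSumOn.sum_eq_zero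
    exact (smul_eq_zero.1 this).resolve_right (h0 a ha)
  have hcard : p ≤ #U :=
    Nat.le_of_dvd (card_pos.2 ⟨a, ha⟩) ((ZMod.natCast_eq_zero_iff _ _).1 hdvd)
  obtain ⟨I, hI, hIcard⟩ := exists_subset_card_eq ((ZMod.val_lt t).le.trans hcard)
  exact ⟨I, hI, by rw [hsum hI, hIcard, ZMod.natCast_zmod_val]⟩

variable [DecidableEq ι]

lemma augGen_mem_or_augGen_mem_of_prod_augGen_mem
    {M : Submodule (ZMod p) (ZMod p)[ZMod p × ZMod p]} {a b c d : ι} (hnodup : [a, b, c, d].Nodup)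
    (h4 : ∀ z ∈ augIdeal (ZMod p) (ZMod p × ZMod p) ^ 4, z ∈ M) (hab : wedge (g a) (g b) ≠ 0)
    (hac : wedge (g a) (g c) ≠ 0) (had : wedge (g a) (g d) ≠ 0) (hcd : wedge (g c) (g d) ≠ 0)
    (hM : ∀ K ⊆ ({a, b, c, d} : Finset ι), a ∈ K ∧ b ∈ K ∨ c ∈ K ∨ d ∈ K →
      ∏ i ∈ K, augGen (ZMod p) (g i) ∈ M) :
    augGen (ZMod p) (g a) ∈ M ∨ augGen (ZMod p) (g b) ∈ M := by
  simp only [List.nodup_cons, List.mem_cons, List.not_mem_nil, or_false, not_or] at hnodup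
  obtain ⟨⟨hab', hac', had'⟩, ⟨hbc', hbd'⟩, hcd', -⟩ := hnodup
  have htriple {i j k : ι} (hij : i ≠ j) (hik : i ≠ k) (hjk : j ≠ k) :
      ∏ l ∈ ({i, j, k} : Finset ι), augGen (ZMod p) (g l) =
        augGen (ZMod p) (g i) * augGen (ZMod p) (g j) * augGen (ZMod p) (g k) := by
    rw [prod_insert (by simp [hij, hik]), prod_pair hjk, mul_assoc]
  refine augGen_mem_or_augGen_mem h4 hab hac had hcd ?_ ?_ ?_ ?_ ?_ ?_ ?_ ?_ ?_
  · simpa using hM {c}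
  · simpa using hM {d}
  · simpa [prod_pair hab', insert_subset_iff] using hM {a, b}
  · simpa [prod_pair hac', insert_subset_iff] using hM {a, c}
  · simpa [prod_pair hbc', insert_subset_iff] using hM {b, c}
  · simpa [htriple hab' hac' hbc', insert_subset_iff] using hM {a, b, c}
  · simpa [htriple hab' had' hbd', insert_subset_iff] using hM {a, b, d}
  · simpa [htriple hac' had' hcd', insert_subset_iff] using hM {a, c, d}
  · simpa [htriple hbc' hbd' hcd', insert_subset_iff] using hM {b, c, d}

namespace IsUFOn

lemma sum_ne_neg {G : Type*} [AddCommGroup G] {g : ι → G} {A I : Finset ι} (h : IsUFOn g s)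
    (hA : A ⊆ s) (hA0 : ∑ i ∈ A, g i = 0) (hI : I ⊆ A) {i : ι} (hi : i ∈ s) (hiA : i ∉ A) :
    ∑ j ∈ I, g j ≠ -g i := fun hIi ↦ by
  have := h.sum_eq_zero_of_add hA hA0 hI (K := {i}) (by simp [hi, hiA]) (by simp [hIi])
  exact h.ne_zero i hi (neg_eq_zero.1 (hIi ▸ this))

lemma wedge_ne_zero (h : IsUFOn g s) (hUs : U ⊆ s) (hU : IsDefective (ZMod p) g U)
    (hcol : ¬ IsNoncollinear g U) {a i : ι} (ha : a ∈ U) (hi : i ∈ s) (hiU : i ∉ U) :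
    wedge (g i) (g a) ≠ 0 := by
  intro h0
  obtain ⟨t, ht⟩ := exists_eq_smul_of_wedge_eq_zero (h.ne_zero a (hUs ha)) h0
  obtain ⟨I, hI, hsum⟩ := hU.exists_sum_eq_smul (fun i hi ↦ h.ne_zero i (hUs hi)) hcol ha (-t)
  exact h.sum_ne_neg hUs hU.isMinZeroSumOn.sum_eq_zero hI hi hiU (by rw [hsum, ht, neg_smul])

lemma isNoncollinear_or (h : IsUFOn g s) (h₁ : U₁ ⊆ s) (h₂ : U₂ ⊆ s) (h₁₂ : Disjoint U₁ U₂)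
    (hU₁ : IsDefective (ZMod p) g U₁) (hU₂ : IsDefective (ZMod p) g U₂) {i : ι} (hi : i ∈ s)
    (hi₁ : i ∉ U₁) (hi₂ : i ∉ U₂) : IsNoncollinear g U₁ ∨ IsNoncollinear g U₂ := by
  by_contra! hcol
  obtain ⟨a, ha⟩ := hU₁.isMinZeroSumOn.nonempty
  obtain ⟨b, hb⟩ := hU₂.isMinZeroSumOn.nonempty
  have hba : wedge (g b) (g a) ≠ 0 :=
    h.wedge_ne_zero h₁ hU₁ hcol.1 ha (h₂ hb) fun hb₁ ↦ disjoint_left.1 h₁₂ hb₁ hb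
  have hne {j} (hj : j ∈ s) : g j ≠ 0 := h.ne_zero j hj
  obtain ⟨I, hI, hIsum⟩ := hU₁.exists_sum_eq_smul (fun j hj ↦ hne (h₁ hj)) hcol.1 ha
    (wedge (g b) (-g i) / wedge (g b) (g a))
  obtain ⟨K, hK, hKsum⟩ := hU₂.exists_sum_eq_smul (fun j hj ↦ hne (h₂ hj)) hcol.2 hb
    (wedge (-g i) (g a) / wedge (g b) (g a))
  refine h.sum_ne_neg (union_subset h₂ h₁) ?_ (union_subset_union hK hI) hi (by simp [hi₁, hi₂]) ?_
  · rw [sum_union h₁₂.symm, hU₁.isMinZeroSumOn.sum_eq_zero, hU₂.isMinZeroSumOn.sum_eq_zero,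
      add_zero]
  · rw [sum_union (h₁₂.symm.mono hK hI), hIsum, hKsum]
    exact (eq_smul_add_smul_of_wedge_ne_zero hba _).symm

lemma exists_wedge_ne_zero (h : IsUFOn g s) (h₁ : U₁ ⊆ s) (h₂ : U₂ ⊆ s) (h₁₂ : Disjoint U₁ U₂)
    (hU₁ : IsDefective (ZMod p) g U₁) (hU₂ : U₂.Nonempty) :
    ∃ c ∈ U₁, ∃ d ∈ U₂, wedge (g c) (g d) ≠ 0 := by
  obtain ⟨d, hd⟩ := hU₂
  by_cases hn : IsNoncollinear g U₁
  · obtain ⟨c, hc, hcd⟩ := hn.exists_wedge_ne_zero (h.ne_zero d (h₂ hd))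
    exact ⟨c, hc, d, hd, hcd⟩
  · obtain ⟨c, hc⟩ := hU₁.isMinZeroSumOn.nonempty
    exact ⟨c, hc, d, hd, mt wedge_eq_zero_comm.1
      (h.wedge_ne_zero h₁ hU₁ hn hc (h₂ hd) (disjoint_right.1 h₁₂ hd))⟩

lemma defectLE_union_of_isNoncollinear (h : IsUFOn g s) (h₁ : U₁ ⊆ s) (h₂ : U₂ ⊆ s) (h₃ : U₃ ⊆ s)
    (h₁₂ : Disjoint U₁ U₂) (h₁₃ : Disjoint U₁ U₃) (h₂₃ : Disjoint U₂ U₃)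
    (hU₁ : IsDefective (ZMod p) g U₁) (hU₂ : IsDefective (ZMod p) g U₂)
    (hU₃ : IsDefective (ZMod p) g U₃) (hn : IsNoncollinear g U₁) :
    DefectLE (ZMod p) g (U₁ ∪ U₂ ∪ U₃) 0 := by
  obtain ⟨c, hc, d, hd, hcd⟩ := h.exists_wedge_ne_zero h₂ h₃ h₂₃ hU₂ hU₃.isMinZeroSumOn.nonempty
  obtain ⟨a, ha, hac, had⟩ := hn.exists_wedge_ne_zero_and_ne_zero hU₁.isMinZeroSumOn hcd
  obtain ⟨b, hb, hba⟩ := hn.exists_wedge_ne_zero (h.ne_zero a (h₁ ha))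
  have hab : a ≠ b := by rintro rfl; exact hba (wedge_self _)
  have hV : ({U₁, U₂, U₃} : Finset (Finset ι)).biUnion id = U₁ ∪ U₂ ∪ U₃ := by
    simp [biUnion_insert, union_assoc]
  by_contra hV0
  rw [← hV] at hV0
  have hmem {K : Finset ι} (hK : K ⊆ {a, b, c, d}) :
      ∏ i ∈ K, augGen (ZMod p) (g i) ∈
        nullSpan (ZMod p) g (({U₁, U₂, U₃} : Finset (Finset ι)).biUnion id) {a, b, c, d} ↔
        a ∈ K ∧ b ∈ K ∨ c ∈ K ∨ d ∈ K := by
    rw [h.prod_augGen_mem_nullSpan_iff (by simp [h₁, h₂, h₃]) (by simp [hU₁, hU₂, hU₃]) hV0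
      (by simp [hV, insert_subset_iff, ha, hb, hc, hd]) hK]
    simp only [mem_insert, mem_singleton, exists_eq_or_imp, exists_eq_left]
    have hF₁ : U₁ ∩ {a, b, c, d} = {a, b} := by grind [disjoint_left]
    have hF₂ : U₂ ∩ {a, b, c, d} = {c} := by grind [disjoint_left]
    have hF₃ : U₃ ∩ {a, b, c, d} = {d} := by grind [disjoint_left]
    rw [hF₁, hF₂, hF₃]
    simp [insert_subset_iff]
  have hnodup : [a, b, c, d].Nodup := by
    have hne {U V : Finset ι} {i j : ι} (hUV : Disjoint U V) (hi : i ∈ U) (hj : j ∈ V) : i ≠ j :=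
      fun hij ↦ disjoint_left.1 hUV hi (hij ▸ hj)
    simp [hab, hne h₁₂ ha hc, hne h₁₂ hb hc, hne h₁₃ ha hd, hne h₁₃ hb hd, hne h₂₃ hc hd]
  have hcard : #{a, b, c, d} = 4 := by simpa using List.toFinset_card_of_nodup hnodup
  rcases augGen_mem_or_augGen_mem_of_prod_augGen_mem hnodup
    (fun z hz ↦ mem_nullSpan_of_mem_augIdeal_pow (hcard ▸ hz)) (mt wedge_eq_zero_comm.1 hba) hac
    had hcd (fun K hK ↦ (hmem hK).2) with h0 | h0
  · have := (hmem (K := {a}) (by simp)).1 (by rwa [prod_singleton])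
    grind
  · have := (hmem (K := {b}) (by simp)).1 (by rwa [prod_singleton])
    grind

lemma defectLE_union (h : IsUFOn g s) (h₁ : U₁ ⊆ s) (h₂ : U₂ ⊆ s) (h₃ : U₃ ⊆ s)
    (h₁₂ : Disjoint U₁ U₂) (h₁₃ : Disjoint U₁ U₃) (h₂₃ : Disjoint U₂ U₃)
    (hU₁ : IsDefective (ZMod p) g U₁) (hU₂ : IsDefective (ZMod p) g U₂)
    (hU₃ : IsDefective (ZMod p) g U₃) : DefectLE (ZMod p) g (U₁ ∪ U₂ ∪ U₃) 0 := by
  obtain ⟨i, hi⟩ := hU₃.isMinZeroSumOn.nonempty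
  rcases h.isNoncollinear_or h₁ h₂ h₁₂ hU₁ hU₂ (h₃ hi) (disjoint_right.1 h₁₃ hi)
    (disjoint_right.1 h₂₃ hi) with hn | hn
  · exact h.defectLE_union_of_isNoncollinear h₁ h₂ h₃ h₁₂ h₁₃ h₂₃ hU₁ hU₂ hU₃ hn
  · rw [union_comm U₁]
    exact h.defectLE_union_of_isNoncollinear h₂ h₁ h₃ h₁₂.symm h₂₃ h₁₃ hU₂ hU₁ hU₃ hn

lemma exists_maximal_defectLE_zero (h : IsUFOn g s) :
    ∃ V ⊆ s, ∑ i ∈ V, g i = 0 ∧ DefectLE (ZMod p) g V 0 ∧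
      ∀ W ⊆ s \ V, W.Nonempty → ∑ i ∈ W, g i = 0 → ¬ DefectLE (ZMod p) g W 0 := by
  obtain ⟨V, hV⟩ := Set.Finite.exists_maximal
    (s := {V | V ⊆ s ∧ ∑ i ∈ V, g i = 0 ∧ DefectLE (ZMod p) g V 0})
    (s.powerset.finite_toSet.subset fun V hV ↦ mem_coe.2 (mem_powerset.2 hV.1))
    ⟨∅, empty_subset s, sum_empty, defectLE_empty⟩
  obtain ⟨hVs, hV0, hVdef⟩ := hV.prop
  refine ⟨V, hVs, hV0, hVdef, fun W hW hne hW0 hWdef ↦ ?_⟩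
  have hd : Disjoint V W := disjoint_sdiff.mono_right hW
  have hle := hV.le_of_ge (y := V ∪ W) ⟨union_subset hVs (hW.trans sdiff_subset), by
    rw [sum_union hd, hV0, hW0, add_zero], hVdef.union hWdef h hVs hV0 hW⟩ subset_union_left
  exact hne.ne_empty (disjoint_self_iff_empty W |>.1 (hd.mono_left (subset_union_right.trans hle)))

theorem card_le_two_mul (h : IsUFOn g s) : #s ≤ 2 * p := by
  obtain ⟨V, hVs, hV0, hVdef, hmax⟩ := h.exists_maximal_defectLE_zero
  obtain ⟨P, hP⟩ := exists_finpartition_isMinZeroSumOn g (s \ V)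
    (sum_sdiff_eq_zero hVs hV0 h.sum_eq_zero)
  have hcard : #P.parts ≤ 2 := by
    by_contra! hlt
    obtain ⟨U₁, m₁, U₂, m₂, U₃, m₃, n₁₂, n₁₃, n₂₃⟩ := two_lt_card.1 hlt
    have hdef {U} (hU : U ∈ P.parts) : IsDefective (ZMod p) g U :=
      ⟨hP U hU, hmax U (P.le hU) (hP U hU).nonempty (hP U hU).sum_eq_zero⟩
    have hsub {U} (hU : U ∈ P.parts) : U ⊆ s := (P.le hU).trans sdiff_subset
    have d₁₂ : Disjoint U₁ U₂ := P.disjoint m₁ m₂ n₁₂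
    have d₁₃ : Disjoint U₁ U₃ := P.disjoint m₁ m₃ n₁₃
    have d₂₃ : Disjoint U₂ U₃ := P.disjoint m₂ m₃ n₂₃
    refine hmax (U₁ ∪ U₂ ∪ U₃) (union_subset (union_subset (P.le m₁) (P.le m₂)) (P.le m₃))
      ((hP U₁ m₁).nonempty.mono (by grind)) ?_ (h.defectLE_union (hsub m₁) (hsub m₂) (hsub m₃)
        d₁₂ d₁₃ d₂₃ (hdef m₁) (hdef m₂) (hdef m₃))
    rw [sum_union (disjoint_union_left.2 ⟨d₁₃, d₂₃⟩), sum_union d₁₂, (hP U₁ m₁).sum_eq_zero,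
      (hP U₂ m₂).sum_eq_zero, (hP U₃ m₃).sum_eq_zero, add_zero, add_zero]
  have hW := h.defectLE_biUnion (k := ZMod p) (fun U hU ↦ (P.le hU).trans sdiff_subset) hP
    P.disjoint
  rw [P.biUnion_parts] at hW
  have hs := (hVdef.union hW h hVs hV0 Subset.rfl).card_lt augIdeal_pow_eq_bot
  rw [union_sdiff_of_subset hVs] at hs
  have := (Fact.out : p.Prime).two_le
  omega

end IsUFOn

end RankTwo

section Coset

variable {p : ℕ} [Fact p.Prime] {ι G : Type*} [AddCommGroup G] {H : AddSubgroup G} {g : ι → G}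
  {s : Finset ι} {e : G}

variable (p) in
/-- A zero-sum family of `p` elements, all equal to `e` up to a multiple of `p • e`. -/
def cosetFamily (e : G) : Fin p → G := fun j ↦ e - Pi.single (M := fun _ ↦ G) 0 (p • e) j

lemma sum_cosetFamily (J : Finset (Fin p)) :
    ∑ j ∈ J, cosetFamily p e j = #J • e - if 0 ∈ J then p • e else 0 := by
  simp only [cosetFamily, sum_sub_distrib, sum_const, sum_pi_single']

lemma sub_cosetFamily_mem (hpe : p • e ∈ H) (j : Fin p) : e - cosetFamily p e j ∈ H := by
  rw [cosetFamily, sub_sub_cancel, Pi.single_apply]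
  split_ifs
  exacts [hpe, zero_mem H]

lemma addOrderOf_cosetFamily {k : ℕ} (he : addOrderOf e = p ^ (k + 1)) (j : Fin p) :
    addOrderOf (cosetFamily p e j) = p ^ (k + 1) := by
  have h0 : p ^ (k + 1) • e = 0 := he ▸ addOrderOf_nsmul_eq_zero e
  rw [cosetFamily, Pi.single_apply]
  split_ifs
  · refine addOrderOf_eq_prime_pow ?_ ?_
    · rw [nsmul_sub, ← mul_nsmul', ← pow_succ, h0, sub_zero]
      exact nsmul_ne_zero_of_lt_addOrderOf (pow_ne_zero k (Fact.out : p.Prime).ne_zero)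
        (he ▸ Nat.pow_lt_pow_right (Fact.out : p.Prime).one_lt k.lt_succ_self)
    · rw [nsmul_sub, ← mul_nsmul', mul_comm, mul_nsmul', h0, nsmul_zero, sub_zero]
  · rw [sub_zero, he]

lemma prime_dvd_of_nsmul_mem (he : e ∉ H) (hpe : p • e ∈ H) {n : ℕ} (hn : n • e ∈ H) : p ∣ n := by
  have hmk (m : ℕ) : m • (e : G ⧸ H) = 0 ↔ m • e ∈ H := QuotientAddGroup.eq_zero_iff (m • e)
  rw [← addOrderOf_eq_prime ((hmk p).2 hpe) (mt (QuotientAddGroup.eq_zero_iff e).1 he)]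
  exact addOrderOf_dvd_of_nsmul_eq_zero ((hmk n).2 hn)

lemma eq_empty_or_univ_of_sum_cosetFamily_mem (he : e ∉ H) (hpe : p • e ∈ H) {J : Finset (Fin p)}
    (hJ : ∑ j ∈ J, cosetFamily p e j ∈ H) : J = ∅ ∨ J = univ := by
  have hdvd : p ∣ #J := by
    refine prime_dvd_of_nsmul_mem he hpe ?_
    simpa using add_mem (sum_mem fun j (_ : j ∈ J) ↦ sub_cosetFamily_mem hpe j) hJ
  rcases J.eq_empty_or_nonempty with rfl | hne
  · exact .inl rfl
  · refine .inr (eq_univ_of_card J (le_antisymm (card_le_univ J) ?_))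
    simpa using Nat.le_of_dvd hne.card_pos hdvd

lemma sum_cosetFamily_eq_zero_of_mem (he : e ∉ H) (hpe : p • e ∈ H) {J : Finset (Fin p)}
    (hJ : ∑ j ∈ J, cosetFamily p e j ∈ H) : ∑ j ∈ J, cosetFamily p e j = 0 := by
  rcases eq_empty_or_univ_of_sum_cosetFamily_mem he hpe hJ with rfl | rfl <;>
    simp [sum_cosetFamily]

lemma isUFOn_cosetFamily (he : e ∉ H) (hpe : p • e ∈ H) : IsUFOn (cosetFamily p e) univ where
  ne_zero j _ h0 := he (by simpa [h0] using sub_cosetFamily_mem hpe j)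
  sum_eq_zero := by simp [sum_cosetFamily]
  sum_inter_eq_zero I _ K _ hI hK := by
    rcases eq_empty_or_univ_of_sum_cosetFamily_mem he hpe (hI ▸ H.zero_mem) with rfl | rfl
    · simp
    · rwa [univ_inter]

lemma IsUFOn.sumElim_cosetFamily [DecidableEq ι] (h : IsUFOn g s) (hg : ∀ i ∈ s, g i ∈ H)
    (he : e ∉ H) (hpe : p • e ∈ H) : IsUFOn (Sum.elim g (cosetFamily p e)) (s.disjSum univ) :=
  h.sumElim (isUFOn_cosetFamily he hpe) fun I hI J _ h0 ↦
    sum_cosetFamily_eq_zero_of_mem he hpe <| by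
      rw [eq_neg_of_add_eq_zero_right h0]
      exact neg_mem (sum_mem fun i hi ↦ hg i (hI hi))

theorem IsUFOn.card_le_prime [DecidableEq ι] {f : ι → ZMod p} (h : IsUFOn f s) : #s ≤ p := by
  have hinl := h.comp_injective (AddMonoidHom.inl (ZMod p) (ZMod p)) fun _ _ ↦ by simp
  have := (hinl.sumElim_cosetFamily (p := p) (H := (AddMonoidHom.inl (ZMod p) (ZMod p)).range)
    (e := (0, 1)) (by simp) (by simp) (by simp)).card_le_two_mul
  rw [card_disjSum, card_univ, Fintype.card_fin] at this
  omega

end Coset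

section CrossSum

variable {ι G : Type*} [AddCommGroup G] {g : ι → G} {s V A : Finset ι} {e x : G} {p n : ℕ}

/-- The cross number of a subfamily of a family over an arbitrary index type. -/
noncomputable def crossSum (g : ι → G) (s : Finset ι) : ℝ :=
  ∑ i ∈ s, (1 : ℝ) / addOrderOf (g i)

lemma one_div_addOrderOf_eq (hp : p ≠ 0) (hx : p ∣ addOrderOf x) :
    (1 : ℝ) / addOrderOf x = 1 / addOrderOf (p • x) / p := by
  have : (p : ℝ) ≠ 0 := Nat.cast_ne_zero.2 hp
  rw [addOrderOf_nsmul_of_dvd hp hx, Nat.cast_div hx this, one_div_div, div_div_cancel_left' this,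
    one_div]

lemma crossSum_eq_crossSum_nsmul_div (hp : p ≠ 0) (hg : ∀ i ∈ s, p ∣ addOrderOf (g i)) :
    crossSum g s = crossSum (fun i ↦ p • g i) s / p := by
  rw [crossSum, crossSum, sum_div]
  exact sum_congr rfl fun i hi ↦ one_div_addOrderOf_eq hp (hg i hi)

variable [Fact p.Prime]

lemma dvd_addOrderOf_of_nsmul_mem_zmultiples (he : addOrderOf e = p ^ n)
    (hx : p • x ∈ AddSubgroup.zmultiples e) (hx0 : x ≠ 0) : p ∣ addOrderOf x := by
  have h0 : p ^ n • p • x = 0 := by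
    rw [← addOrderOf_dvd_iff_nsmul_eq_zero, ← he]
    exact addOrderOf_dvd_of_mem_zmultiples hx
  rw [← mul_nsmul', ← pow_succ, ← addOrderOf_dvd_iff_nsmul_eq_zero] at h0
  obtain ⟨j, -, hj⟩ := (Nat.dvd_prime_pow Fact.out).1 h0
  rw [hj]
  refine dvd_pow_self p ?_
  rintro rfl
  exact hx0 (AddMonoid.addOrderOf_eq_one_iff.1 hj)

lemma exists_eq_pow_nsmul_of_mem_zmultiples (he : addOrderOf e = p ^ n)
    (hx : x ∈ AddSubgroup.zmultiples e) {j : ℕ} (hj : j ≤ n) (hjx : p ^ j • x = 0) :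
    ∃ c : ℕ, x = c • p ^ (n - j) • e := by
  have hp : p ^ j ≠ 0 := pow_ne_zero j (Fact.out : p.Prime).ne_zero
  have hfin : IsOfFinAddOrder e :=
    addOrderOf_pos_iff.1 (he ▸ pow_pos (Fact.out : p.Prime).pos n)
  obtain ⟨t, rfl⟩ := hfin.mem_multiples_iff_mem_zmultiples.2 hx
  simp only at hjx ⊢
  rw [← mul_nsmul', ← addOrderOf_dvd_iff_nsmul_eq_zero, he, ← Nat.add_sub_cancel' hj, pow_add,
    Nat.mul_dvd_mul_iff_left (Nat.pos_of_ne_zero hp)] at hjx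
  obtain ⟨c, rfl⟩ := hjx
  exact ⟨c, by rw [← mul_nsmul', mul_comm]⟩

lemma augGen_pow_dvd_augGen (he : addOrderOf e = p ^ n) (hx : x ∈ AddSubgroup.zmultiples e) :
    augGen (ZMod p) e ^ (p ^ n / addOrderOf x) ∣ augGen (ZMod p) x := by
  obtain ⟨j, hjn, hj⟩ := (Nat.dvd_prime_pow (Fact.out : p.Prime)).1
    (he ▸ addOrderOf_dvd_of_mem_zmultiples hx)
  obtain ⟨c, hc⟩ := exists_eq_pow_nsmul_of_mem_zmultiples he hx hjn
    (hj ▸ addOrderOf_nsmul_eq_zero x)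
  rw [hj, Nat.pow_div hjn (Fact.out : p.Prime).pos, ← augGen_char_pow_nsmul]
  conv_rhs => rw [hc]
  exact augGen_dvd_augGen_nsmul c _

lemma IsZeroSumFreeOn.sum_div_addOrderOf_lt (h : IsZeroSumFreeOn g A) (he : addOrderOf e = p ^ n)
    (hg : ∀ i ∈ A, g i ∈ AddSubgroup.zmultiples e) :
    ∑ i ∈ A, p ^ n / addOrderOf (g i) < p ^ n := by
  classical
  by_contra! hle
  have h0 : augGen (ZMod p) e ^ p ^ n = 0 := by
    rw [← augGen_char_pow_nsmul, ← he, addOrderOf_nsmul_eq_zero, augGen_zero]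
  have hdvd : augGen (ZMod p) e ^ p ^ n ∣ ∏ i ∈ A, augGen (ZMod p) (g i) :=
    (pow_dvd_pow _ hle).trans <| (prod_pow_eq_pow_sum A _ _).symm.dvd.trans <|
      prod_dvd_prod_of_dvd _ _ fun i hi ↦ augGen_pow_dvd_augGen he (hg i hi)
  have hone := h.constCoeff_prod_augGen (k := ZMod p)
  rw [h0, zero_dvd_iff] at hdvd
  rw [hdvd, map_zero] at hone
  exact zero_ne_one hone

theorem IsMinZeroSumOn.crossSum_le_one (h : IsMinZeroSumOn g V) (he : addOrderOf e = p ^ n)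
    (hg : ∀ i ∈ V, g i ∈ AddSubgroup.zmultiples e) : crossSum g V ≤ 1 := by
  classical
  have hp := (Fact.out : p.Prime)
  have hdvd (i) (hi : i ∈ V) : addOrderOf (g i) ∣ p ^ n :=
    he ▸ addOrderOf_dvd_of_mem_zmultiples (hg i hi)
  let d (i : ι) : ℕ := p ^ n / addOrderOf (g i)
  obtain ⟨i₀, hi₀, hmin⟩ := exists_min_image V d h.nonempty
  have hd (i) (hi : i ∈ V) : d i₀ ∣ d i := by
    obtain ⟨a, -, ha⟩ := (Nat.dvd_prime_pow hp).1 (Nat.div_dvd_of_dvd (hdvd i hi))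
    obtain ⟨b, -, hb⟩ := (Nat.dvd_prime_pow hp).1 (Nat.div_dvd_of_dvd (hdvd i₀ hi₀))
    have hle : d i₀ ≤ d i := hmin i hi
    simp only [d, ha, hb] at hle ⊢
    exact pow_dvd_pow p ((Nat.pow_le_pow_iff_right hp.one_lt).1 hle)
  have hlt : ∑ i ∈ V.erase i₀, d i < p ^ n :=
    (h.isZeroSumFreeOn_of_ssubset (erase_ssubset hi₀)).sum_div_addOrderOf_lt he
      fun i hi ↦ hg i (mem_of_mem_erase hi)
  have hle : ∑ i ∈ V, d i ≤ p ^ n := by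
    rw [← sum_erase_add V d hi₀]
    have : d i₀ ≤ p ^ n - ∑ i ∈ V.erase i₀, d i :=
      Nat.le_of_dvd (Nat.sub_pos_of_lt hlt) <| Nat.dvd_sub (Nat.div_dvd_of_dvd (hdvd i₀ hi₀))
        (dvd_sum fun i hi ↦ hd i (mem_of_mem_erase hi))
    omega
  have hcross : crossSum g V = (∑ i ∈ V, d i : ℕ) / (p ^ n : ℕ) := by
    rw [crossSum, Nat.cast_sum, sum_div]
    refine sum_congr rfl fun i hi ↦ ?_
    have hord : addOrderOf (g i) ≠ 0 :=
      ne_zero_of_dvd_ne_zero (pow_ne_zero n hp.ne_zero) (hdvd i hi)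
    rw [Nat.cast_div (hdvd i hi) (mod_cast hord), div_div_cancel_left' (mod_cast
      pow_ne_zero n hp.ne_zero), one_div]
  rw [hcross]
  exact div_le_one_of_le₀ (mod_cast hle) (by positivity)

end CrossSum

section Saturation

variable {ι G : Type*} [AddCommGroup G] {H : AddSubgroup G} {g : ι → G} {s V W : Finset ι} {e : G}
  {p n r : ℕ} {C : ℝ}

lemma exists_isMinZeroSumOn_nsmul (hW : p • ∑ i ∈ W, g i = 0) (h0 : ∑ i ∈ W, g i ≠ 0) :
    ∃ V ⊆ W, IsMinZeroSumOn (fun i ↦ p • g i) V ∧ ∑ i ∈ V, g i ≠ 0 := by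
  classical
  rw [smul_sum] at hW
  obtain ⟨P, hP⟩ := exists_finpartition_isMinZeroSumOn (fun i ↦ p • g i) W hW
  rw [← P.biUnion_parts, sum_biUnion P.disjoint] at h0
  obtain ⟨V, hV, hV0⟩ := exists_ne_zero_of_sum_ne_zero h0
  exact ⟨V, P.le hV, hP V hV, hV0⟩

variable [DecidableEq ι]

lemma IsUFOn.update_sum (h : IsUFOn g s) (hV : V ⊆ s) {v : ι} (hv : v ∈ V)
    (h0 : ∑ i ∈ V, g i ≠ 0) :
    IsUFOn (Function.update g v (∑ i ∈ V, g i)) (insert v (s \ V)) := by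
  let π (i : ι) : ι := if i ∈ V then v else i
  have hfiber (k) (hk : k ∈ insert v (s \ V)) :
      ∑ i ∈ s with π i = k, g i = Function.update g v (∑ i ∈ V, g i) k := by
    rcases eq_or_ne k v with rfl | hkv
    · rw [Function.update_self]
      refine sum_congr ?_ fun _ _ ↦ rfl
      grind
    · rw [Function.update_of_ne hkv, ← sum_singleton g k]
      refine sum_congr ?_ fun _ _ ↦ rfl
      grind
  have hne (k) (hk : k ∈ insert v (s \ V)) : Function.update g v (∑ i ∈ V, g i) k ≠ 0 := by
    rcases eq_or_ne k v with rfl | hkv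
    · rwa [Function.update_self]
    · rw [Function.update_of_ne hkv]
      exact h.ne_zero k (by grind)
  exact (h.fiberwise π (by grind) fun k hk ↦ hfiber k hk ▸ hne k hk).congr hfiber

lemma crossSum_add_crossSum_sdiff (g : ι → G) (hV : V ⊆ s) :
    crossSum g V + crossSum g (s \ V) = crossSum g s := by
  rw [add_comm]
  exact sum_sdiff hV

lemma crossSum_update_insert (x : G) {v : ι} (hv : v ∉ s) :
    crossSum (Function.update g v x) (insert v s) = 1 / addOrderOf x + crossSum g s := by
  rw [crossSum, crossSum, sum_insert hv, Function.update_self]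
  congr 1
  refine sum_congr rfl fun i hi ↦ ?_
  rw [Function.update_of_ne (ne_of_mem_of_not_mem hi hv)]

/-- Multiplication by `p` creates no new zero-sum subfamilies among the elements that it does not
kill. -/
def IsSaturatedOn (p : ℕ) (g : ι → G) (s : Finset ι) : Prop :=
  ∀ W ⊆ s, (∀ i ∈ W, p • g i ≠ 0) → p • ∑ i ∈ W, g i = 0 → ∑ i ∈ W, g i = 0

lemma IsSaturatedOn.isUFOn_nsmul (hsat : IsSaturatedOn p g V) (h : IsUFOn g V)
    (hp : ∀ i ∈ V, p • g i ≠ 0) : IsUFOn (fun i ↦ p • g i) V where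
  ne_zero := hp
  sum_eq_zero := by rw [← smul_sum, h.sum_eq_zero, smul_zero]
  sum_inter_eq_zero I hI K hK hI0 hK0 := by
    simp only [← smul_sum] at hI0 hK0 ⊢
    rw [h.sum_inter_eq_zero I hI K hK (hsat I hI (fun i hi ↦ hp i (hI hi)) hI0)
      (hsat K hK (fun i hi ↦ hp i (hK hi)) hK0), smul_zero]

variable [Fact p.Prime]

/-- A subfamily whose sum is a nonzero `p`-torsion element `x` and which is minimal with respect to
becoming zero-sum after multiplication by `p` has cross number at most `1 / p = 1 / addOrderOf x`,
so replacing it by its sum does not decrease the cross number. -/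
lemma IsUFOn.exists_crossSum_le_of_not_isSaturatedOn (h : IsUFOn g s) (hg : ∀ i ∈ s, g i ∈ H)
    (he : addOrderOf e = p ^ n) (hH : ∀ x ∈ H, p • x ∈ AddSubgroup.zmultiples e)
    (hsat : ¬ IsSaturatedOn p g s) :
    ∃ (f : ι → G) (t : Finset ι), t ⊂ s ∧ IsUFOn f t ∧ (∀ i ∈ t, f i ∈ H) ∧
      crossSum g s ≤ crossSum f t := by
  simp only [IsSaturatedOn, not_forall] at hsat
  obtain ⟨W, hWs, hWp, hW0, hW⟩ := hsat
  obtain ⟨V, hVW, hV, hV0⟩ := exists_isMinZeroSumOn_nsmul hW0 hW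
  have hVs := hVW.trans hWs
  have hpV : p • ∑ i ∈ V, g i = 0 := by rw [smul_sum, hV.sum_eq_zero]
  have hVnontriv : V.Nontrivial := by
    refine hV.nonempty.exists_eq_singleton_or_nontrivial.resolve_left ?_
    rintro ⟨v, rfl⟩
    exact hWp v (hVW (mem_singleton_self v)) (by simpa using hpV)
  obtain ⟨v, hv, w, hw, hvw⟩ := hVnontriv
  have hgV (i) (hi : i ∈ V) : p • g i ∈ AddSubgroup.zmultiples e := hH _ (hg i (hVs hi))
  have hle : crossSum g V ≤ 1 / addOrderOf (∑ i ∈ V, g i) := by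
    rw [addOrderOf_eq_prime hpV hV0, crossSum_eq_crossSum_nsmul_div
      (Fact.out : p.Prime).ne_zero fun i hi ↦
        dvd_addOrderOf_of_nsmul_mem_zmultiples he (hgV i hi) (h.ne_zero i (hVs hi))]
    gcongr
    exact hV.crossSum_le_one he hgV
  refine ⟨Function.update g v (∑ i ∈ V, g i), insert v (s \ V), ?_, h.update_sum hVs hv hV0,
    fun i hi ↦ ?_, ?_⟩
  · exact (ssubset_iff_of_subset (insert_subset (hVs hv) sdiff_subset)).2
      ⟨w, hVs hw, by simp [hvw.symm, mem_coe.1 hw]⟩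
  · rcases eq_or_ne i v with rfl | hiv
    · rw [Function.update_self]
      exact sum_mem fun i hi ↦ hg i (hVs hi)
    · rw [Function.update_of_ne hiv]
      exact hg i (mem_sdiff.1 (mem_of_mem_insert_of_ne hi hiv)).1
  · rw [crossSum_update_insert _ (fun hvs ↦ (mem_sdiff.1 hvs).2 hv),
      ← crossSum_add_crossSum_sdiff g hVs]
    gcongr

theorem IsUFOn.exists_isSaturatedOn (h : IsUFOn g s) (hg : ∀ i ∈ s, g i ∈ H)
    (he : addOrderOf e = p ^ n) (hH : ∀ x ∈ H, p • x ∈ AddSubgroup.zmultiples e) :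
    ∃ (f : ι → G) (t : Finset ι), IsUFOn f t ∧ (∀ i ∈ t, f i ∈ H) ∧ IsSaturatedOn p f t ∧
      crossSum g s ≤ crossSum f t := by
  induction s using Finset.strongInduction generalizing g with
  | H s ih =>
    by_cases hsat : IsSaturatedOn p g s
    · exact ⟨g, s, h, hg, hsat, le_rfl⟩
    obtain ⟨f, t, hts, hf, hfH, hle⟩ := h.exists_crossSum_le_of_not_isSaturatedOn hg he hH hsat
    obtain ⟨f', t', hf', hf'H, hsat', hle'⟩ := ih t hts hf hfH
    exact ⟨f', t', hf', hf'H, hsat', hle.trans hle'⟩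

lemma IsUFOn.crossSum_of_nsmul_eq_zero (h : IsUFOn g s) (hp : ∀ i ∈ s, p • g i = 0) :
    crossSum g s = #s / p := by
  rw [crossSum, sum_congr rfl fun i hi ↦ by rw [addOrderOf_eq_prime (hp i hi) (h.ne_zero i hi)],
    sum_const, nsmul_eq_mul, mul_one_div]

theorem IsUFOn.crossSum_le_add_div (h : IsUFOn g s) (hg : ∀ i ∈ s, g i ∈ H)
    (he : addOrderOf e = p ^ n) (hH : ∀ x ∈ H, p • x ∈ AddSubgroup.zmultiples e)
    (htors : ∀ (f : ι → G) (t : Finset ι), IsUFOn f t → (∀ i ∈ t, f i ∈ H) →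
      (∀ i ∈ t, p • f i = 0) → #t ≤ r * p)
    (hmul : ∀ (f : ι → G) (t : Finset ι), IsUFOn f t →
      (∀ i ∈ t, f i ∈ AddSubgroup.zmultiples e) → crossSum f t ≤ C) :
    crossSum g s ≤ r + C / p := by
  classical
  have hp : p.Prime := Fact.out
  obtain ⟨f, t, hf, hfH, hsat, hle⟩ := h.exists_isSaturatedOn hg he hH
  refine hle.trans ?_
  let T := t.filter fun i ↦ p • f i = 0
  have hTt : T ⊆ t := filter_subset _ _
  have hNp (i) (hi : i ∈ t \ T) : p • f i ≠ 0 := by simp_all [T]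
  have hpN : p • ∑ i ∈ t \ T, f i = 0 := by
    rw [sum_sdiff_eq_sub hTt, hf.sum_eq_zero, zero_sub, smul_neg, smul_sum,
      Finset.sum_eq_zero fun i hi ↦ (mem_filter.1 hi).2, neg_zero]
  have hN0 := hsat _ sdiff_subset hNp hpN
  have hT : IsUFOn f T := hf.mono hTt <| by
    simpa [hN0, hf.sum_eq_zero] using sum_sdiff (f := f) hTt
  have hN : IsUFOn (fun i ↦ p • f i) (t \ T) :=
    IsSaturatedOn.isUFOn_nsmul (fun W hW ↦ hsat W (hW.trans sdiff_subset))
      (hf.mono sdiff_subset hN0) hNp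
  rw [← crossSum_add_crossSum_sdiff f hTt, hT.crossSum_of_nsmul_eq_zero fun i hi ↦
      (mem_filter.1 hi).2, crossSum_eq_crossSum_nsmul_div hp.ne_zero fun i hi ↦
      dvd_addOrderOf_of_nsmul_mem_zmultiples he (hH _ (hfH i (sdiff_subset hi)))
        (hf.ne_zero i (sdiff_subset hi))]
  gcongr
  · rw [div_le_iff₀ (mod_cast hp.pos)]
    exact_mod_cast htors f T hT (fun i hi ↦ hfH i (hTt hi)) fun i hi ↦ (mem_filter.1 hi).2
  · exact hmul _ _ hN fun i hi ↦ hH _ (hfH i (sdiff_subset hi))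

end Saturation

section UpperBound

variable {p n : ℕ} {ι G : Type*} [AddCommGroup G] {g : ι → G} {s : Finset ι} {e : G}

lemma sum_one_div_pow_succ (p : ℝ) (n : ℕ) :
    ∑ k ∈ range (n + 1), 1 / p ^ k = 1 + (∑ k ∈ range n, 1 / p ^ k) / p := by
  simp only [sum_range_succ', pow_zero, div_one, sum_div, div_div, pow_succ, add_comm]

lemma IsUFOn.exists_of_mem_range [DecidableEq ι] {K : Type*} [AddCommGroup K] (h : IsUFOn g s)
    (φ : K →+ G) (hφ : Function.Injective φ) (hg : ∀ i ∈ s, g i ∈ φ.range) :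
    ∃ f : ι → K, IsUFOn f s := by
  choose! f hf using hg
  exact ⟨f, .of_comp_injective φ hφ (h.congr fun i hi ↦ (hf i hi).symm)⟩

variable [Fact p.Prime]

lemma addOrderOf_prime_nsmul (he : addOrderOf e = p ^ (n + 1)) : addOrderOf (p • e) = p ^ n := by
  have hp : p.Prime := Fact.out
  rw [addOrderOf_nsmul_of_dvd hp.ne_zero (he ▸ dvd_pow_self p n.succ_ne_zero), he, pow_succ,
    Nat.mul_div_cancel _ hp.pos]

lemma exists_zmod_injective_of_addOrderOf_eq_pow (he : addOrderOf e = p ^ (n + 1)) :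
    ∃ ψ : ZMod p →+ G, Function.Injective ψ ∧
      ∀ x ∈ AddSubgroup.zmultiples e, p • x = 0 → x ∈ ψ.range := by
  have hord : addOrderOf (p ^ n • e) = p := by
    rw [addOrderOf_nsmul_of_dvd (pow_ne_zero n (Fact.out : p.Prime).ne_zero)
      (he ▸ pow_dvd_pow p n.le_succ), he, Nat.pow_div n.le_succ (Fact.out : p.Prime).pos]
    simp
  have h0 : zmultiplesHom G (p ^ n • e) p = 0 := by
    rw [zmultiplesHom_apply, natCast_zsmul]
    exact addOrderOf_dvd_iff_nsmul_eq_zero.1 hord.dvd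
  refine ⟨ZMod.lift p ⟨_, h0⟩, (ZMod.lift_injective p).2 fun m hm ↦ ?_, fun x hx hpx ↦ ?_⟩
  · rwa [zmultiplesHom_apply, ← addOrderOf_dvd_iff_zsmul_eq_zero, hord,
      ← ZMod.intCast_zmod_eq_zero_iff_dvd] at hm
  · obtain ⟨c, rfl⟩ := exists_eq_pow_nsmul_of_mem_zmultiples he hx (Nat.succ_pos n)
      (by rwa [pow_one])
    exact ⟨(c : ℤ), by rw [ZMod.lift_coe]; simp⟩

variable [DecidableEq ι]

theorem IsUFOn.crossSum_le_of_mem_zmultiples (h : IsUFOn g s) (he : addOrderOf e = p ^ n)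
    (hg : ∀ i ∈ s, g i ∈ AddSubgroup.zmultiples e) :
    crossSum g s ≤ ∑ k ∈ range n, 1 / (p : ℝ) ^ k := by
  induction n generalizing e g s with
  | zero =>
    rw [pow_zero, AddMonoid.addOrderOf_eq_one_iff] at he
    have : s = ∅ := eq_empty_of_forall_notMem fun i hi ↦
      h.ne_zero i hi (by simpa [he] using hg i hi)
    simp [this, crossSum]
  | succ n ih =>
    obtain ⟨ψ, hψ, hrange⟩ := exists_zmod_injective_of_addOrderOf_eq_pow he
    have htors (f : ι → G) (t : Finset ι) (hf : IsUFOn f t)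
        (ht : ∀ i ∈ t, f i ∈ AddSubgroup.zmultiples e) (hpt : ∀ i ∈ t, p • f i = 0) :
        #t ≤ 1 * p := by
      obtain ⟨f', hf'⟩ := hf.exists_of_mem_range ψ hψ fun i hi ↦ hrange _ (ht i hi) (hpt i hi)
      rw [one_mul]
      exact hf'.card_le_prime
    have hH (x) (hx : x ∈ AddSubgroup.zmultiples e) : p • x ∈ AddSubgroup.zmultiples (p • e) := by
      obtain ⟨m, rfl⟩ := hx
      exact ⟨m, smul_comm m p e⟩
    rw [sum_one_div_pow_succ]
    simpa only [Nat.cast_one] using h.crossSum_le_add_div hg (addOrderOf_prime_nsmul he) hH htors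
      fun f t hf ht ↦ ih hf (addOrderOf_prime_nsmul he) ht

lemma addOrderOf_one_zero (p m : ℕ) : addOrderOf ((1, 0) : ZMod m × ZMod p) = m := by
  rw [Prod.addOrderOf, ZMod.addOrderOf_one, addOrderOf_zero, Nat.lcm_one_right]

theorem IsUFOn.crossSum_le {g : ι → ZMod (p ^ (n + 1)) × ZMod p} (h : IsUFOn g s) :
    crossSum g s ≤ 1 + ∑ k ∈ range (n + 1), 1 / (p : ℝ) ^ k := by
  have : NeZero (p ^ (n + 1)) := ⟨pow_ne_zero _ (Fact.out : p.Prime).ne_zero⟩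
  obtain ⟨ψ, hψ, hrange⟩ := exists_zmod_injective_of_addOrderOf_eq_pow (p := p) (n := n)
    (ZMod.addOrderOf_one (p ^ (n + 1)))
  have htors (f : ι → ZMod (p ^ (n + 1)) × ZMod p) (t : Finset ι) (hf : IsUFOn f t)
      (hpt : ∀ i ∈ t, p • f i = 0) : #t ≤ 2 * p := by
    obtain ⟨f', hf'⟩ := hf.exists_of_mem_range (ψ.prodMap (.id _))
      (hψ.prodMap Function.injective_id) fun i hi ↦ by
        obtain ⟨a, ha⟩ := hrange (f i).1 ⟨(f i).1.val, by simp⟩ (congrArg Prod.fst (hpt i hi))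
        exact ⟨(a, (f i).2), Prod.ext ha rfl⟩
    exact hf'.card_le_two_mul
  have hH (x : ZMod (p ^ (n + 1)) × ZMod p) : p • x ∈ AddSubgroup.zmultiples (p • (1, 0)) :=
    ⟨x.1.val, by ext <;> simp [mul_comm]⟩
  have he := addOrderOf_prime_nsmul (addOrderOf_one_zero p (p ^ (n + 1)))
  rw [sum_one_div_pow_succ, ← add_assoc, one_add_one_eq_two]
  simpa only [Nat.cast_ofNat] using h.crossSum_le_add_div (H := ⊤)
    (fun _ _ ↦ AddSubgroup.mem_top _) he (fun x _ ↦ hH x) (fun f t hf _ hpt ↦ htors f t hf hpt)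
    fun f t hf ht ↦ hf.crossSum_le_of_mem_zmultiples he ht

end UpperBound

section LowerBound

variable {p n k : ℕ} {G : Type*} [AddCommGroup G] {H K : AddSubgroup G} {e : G} {c : ℝ}

lemma IsUFOn.comp_equiv {ι κ : Type*} [Fintype ι] [Fintype κ] [DecidableEq ι] [DecidableEq κ]
    {g : ι → G} (h : IsUFOn g univ) (σ : κ ≃ ι) : IsUFOn (g ∘ σ) univ where
  ne_zero k _ := h.ne_zero (σ k) (mem_univ _)
  sum_eq_zero := (σ.sum_comp g).trans h.sum_eq_zero
  sum_inter_eq_zero I _ J _ hI hJ := by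
    have hsum (L : Finset κ) : ∑ k ∈ L, (g ∘ σ) k = ∑ i ∈ L.map σ.toEmbedding, g i := by
      simp [sum_map]
    rw [hsum] at hI hJ ⊢
    rw [map_inter]
    exact h.sum_inter_eq_zero _ (subset_univ _) _ (subset_univ _) hI hJ

/-- The cross numbers of the unique factorization families with values in a subgroup. -/
def ufCrossNums (H : AddSubgroup G) : Set ℝ :=
  {c | ∃ (ℓ : ℕ) (g : Fin ℓ → G), (∀ i, g i ∈ H) ∧ IsUFOn g univ ∧ crossNum g = c}

lemma zero_mem_ufCrossNums (H : AddSubgroup G) : 0 ∈ ufCrossNums H :=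
  ⟨0, Fin.elim0, fun i ↦ i.elim0, ⟨fun i ↦ i.elim0, by simp, by simp⟩, by simp [crossNum]⟩

variable [Fact p.Prime]

lemma add_one_div_pow_mem_ufCrossNums (hc : c ∈ ufCrossNums H) (hHK : H ≤ K) (heK : e ∈ K)
    (heH : e ∉ H) (hpe : p • e ∈ H) (he : addOrderOf e = p ^ (k + 1)) :
    c + 1 / (p : ℝ) ^ k ∈ ufCrossNums K := by
  obtain ⟨ℓ, g, hgH, hg, rfl⟩ := hc
  have hUF := hg.sumElim_cosetFamily (fun i _ ↦ hgH i) heH hpe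
  rw [univ_disjSum_univ] at hUF
  refine ⟨ℓ + p, _, fun i ↦ ?_, hUF.comp_equiv finSumFinEquiv.symm, ?_⟩
  · rcases h : finSumFinEquiv.symm i with j | j
    · simpa [h] using hHK (hgH j)
    · simpa [h] using sub_mem heK (hHK (sub_cosetFamily_mem hpe j))
  · have hp : (p : ℝ) ≠ 0 := Nat.cast_ne_zero.2 (Fact.out : p.Prime).ne_zero
    have hsum := finSumFinEquiv.symm.sum_comp fun x ↦
      (1 : ℝ) / addOrderOf (Sum.elim g (cosetFamily p e) x)
    simp only [crossNum, Function.comp_apply, hsum, Fintype.sum_sum_type, Sum.elim_inl,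
      Sum.elim_inr, addOrderOf_cosetFamily he, sum_const, card_univ, Fintype.card_fin]
    congr 1
    rw [nsmul_eq_mul, mul_one_div, Nat.cast_pow, pow_succ']
    field_simp

theorem sum_one_div_pow_mem_ufCrossNums (he : addOrderOf e = p ^ n) :
    ∑ k ∈ range n, 1 / (p : ℝ) ^ k ∈ ufCrossNums (AddSubgroup.zmultiples e) := by
  induction n generalizing e with
  | zero => simpa using zero_mem_ufCrossNums _
  | succ n ih =>
    have hpe : p • e ∈ AddSubgroup.zmultiples e :=
      AddSubgroup.nsmul_mem_zmultiples e p
    rw [sum_range_succ]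
    refine add_one_div_pow_mem_ufCrossNums (ih (addOrderOf_prime_nsmul he))
      (AddSubgroup.zmultiples_le_of_mem hpe) (AddSubgroup.mem_zmultiples e) (fun hmem ↦ ?_)
      (AddSubgroup.mem_zmultiples _) he
    have hdvd := addOrderOf_dvd_of_mem_zmultiples hmem
    rw [he, addOrderOf_prime_nsmul he] at hdvd
    exact Nat.not_succ_le_self n ((Nat.pow_dvd_pow_iff_le_right (Fact.out : p.Prime).one_lt).1 hdvd)

theorem one_add_sum_one_div_pow_mem_ufCrossNums (p m : ℕ) [Fact p.Prime] :
    1 + ∑ k ∈ range m, 1 / (p : ℝ) ^ k ∈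
      ufCrossNums (⊤ : AddSubgroup (ZMod (p ^ m) × ZMod p)) := by
  have he : addOrderOf ((0, 1) : ZMod (p ^ m) × ZMod p) = p ^ (0 + 1) := by
    rw [Prod.addOrderOf, ZMod.addOrderOf_one, addOrderOf_zero, Nat.lcm_one_left, zero_add, pow_one]
  have he0 : ((0, 1) : ZMod (p ^ m) × ZMod p) ∉ AddSubgroup.zmultiples (1, 0) := by
    rintro ⟨t, ht⟩
    simpa using congrArg Prod.snd ht
  have hpe : p • ((0, 1) : ZMod (p ^ m) × ZMod p) ∈ AddSubgroup.zmultiples (1, 0) := by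
    have h0 : p • ((0, 1) : ZMod (p ^ m) × ZMod p) = 0 := by ext <;> simp
    exact h0 ▸ zero_mem _
  have hsum := sum_one_div_pow_mem_ufCrossNums (addOrderOf_one_zero p (p ^ m))
  simpa [add_comm] using
    add_one_div_pow_mem_ufCrossNums hsum le_top (AddSubgroup.mem_top _) he0 hpe he

end LowerBound

section CrossNumber

lemma sum_one_div_pow_eq {K : Type*} [Field K] {x : K} (hx0 : x ≠ 0) (hx1 : x ≠ 1) (n : ℕ) :
    ∑ k ∈ range (n + 1), 1 / x ^ k = (x ^ (n + 1) - 1) / (x ^ (n + 1) - x ^ n) := by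
  have h1 : x - 1 ≠ 0 := sub_ne_zero.2 hx1
  simp only [one_div, ← inv_pow]
  rw [geom_sum_inv hx1 hx0, inv_pow, pow_succ x n, ← mul_sub_one]
  field_simp

theorem isGreatest_crossNum_of_isUFIM (p n : ℕ) [Fact p.Prime] :
    IsGreatest {x : ℝ | ∃ (ℓ : ℕ) (g : Fin ℓ → ZMod (p ^ (n + 1)) × ZMod p),
      IsUFIM g ∧ crossNum g = x} (1 + ∑ k ∈ range (n + 1), 1 / (p : ℝ) ^ k) := by
  constructor
  · obtain ⟨ℓ, g, -, hg, hc⟩ := one_add_sum_one_div_pow_mem_ufCrossNums p (n + 1)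
    exact ⟨ℓ, g, isUFIM_iff_isUFOn_univ.2 hg, hc⟩
  · rintro _ ⟨ℓ, g, hg, rfl⟩
    exact (isUFIM_iff_isUFOn_univ.1 hg).crossSum_le

end CrossNumber

/-- `K₁(C_{p^m} ⊕ C_p) = 1 + Σ_{k=1}^m 1/p^{k−1} = 1 + (p^m − 1)/(p^m − p^{m−1})`. -/
theorem K1_pm_p (p : ℕ) (hp : p.Prime) (m : ℕ) (hm : 1 ≤ m) :
    K1 (ZMod (p ^ m) × ZMod p) = 1 + ∑ k ∈ Finset.range m, (1 : ℝ) / (p : ℝ) ^ k ∧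
    K1 (ZMod (p ^ m) × ZMod p) =
      1 + ((p : ℝ) ^ m - 1) / ((p : ℝ) ^ m - (p : ℝ) ^ (m - 1)) := by
  have : Fact p.Prime := ⟨hp⟩
  obtain ⟨n, rfl⟩ := Nat.exists_eq_add_of_le' hm
  have hK1 := (isGreatest_crossNum_of_isUFIM p n).csSup_eq
  refine ⟨hK1, hK1.trans ?_⟩
  rw [sum_one_div_pow_eq (Nat.cast_ne_zero.2 hp.ne_zero) (Nat.cast_ne_one.2 hp.ne_one),
    Nat.add_sub_cancel]
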